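/- arXiv:1806.09726 — 2 statements merged into one kernel-verified Lean document; each statement's English description precedes it below -/
import Mathlib

section
/- There is a constant C > 0 such that f(K₃, p) ≤ C·p^(−3/2) for all p ∈ (0,1), and for every integer m ≥ 4 there is a constant C_m > 0 such that f(K_m, p) ≤ C_m · p^(−2m/3 + c_m) for all p ∈ (0,1), where c_m = m/(2m−3) if m ≡ 0 (mod 3), c_m = 2/3 if m ≡ 1 (mod 3), and c_m = (2m+8)/(6m−3) if m ≡ 2 (mod 3). -/
open scoped Classical

namespace OnlineRamseyGame

/-- A valid Builder strategy: it never builds a loop, and along any play the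
edges built are pairwise distinct. -/
def ValidBuilder {V : Type*} (B : List Bool → Sym2 V) : Prop :=
  (∀ h : List Bool, ¬ (B h).IsDiag) ∧
  ∀ h : List Bool, ∀ i : ℕ, i < h.length → B (h.take i) ≠ B h

/-- The history (as a list) of the first `t` values of the color sequence `x`. -/
def histSeq (x : ℕ → Bool) (t : ℕ) : List Bool := (List.range t).map x

/-- Extend a finite color sequence to an infinite one (by `false`). -/
def extSeq {N : ℕ} (x : Fin N → Bool) : ℕ → Bool :=
  fun t => if h : t < N then x ⟨t, h⟩ else false

/-- The probability of the outcome `x` when each turn is independently `true`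
with probability `p` and `false` with probability `1 - p`. -/
noncomputable def weight (p : ℝ) {N : ℕ} (x : Fin N → Bool) : ℝ :=
  ∏ i, if x i then p else 1 - p

/-- The graph of successful queries (within the first `N` queries) contains a
copy of `H`. -/
def ContainsCopy {V : Type*} (H : SimpleGraph V) (edge : ℕ → Sym2 ℕ)
    (x : ℕ → Bool) (N : ℕ) : Prop :=
  ∃ f : V → ℕ, Function.Injective f ∧
    ∀ u v : V, H.Adj u v → ∃ t, t < N ∧ edge t = s(f u, f v) ∧ x t = true

/-- The probability that strategy `Q` finds a copy of `H` within `N` queries in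
the Subgraph Query Game with parameter `p`. -/
noncomputable def queryProb {V : Type*} (H : SimpleGraph V)
    (Q : List Bool → Sym2 ℕ) (N : ℕ) (p : ℝ) : ℝ :=
  ∑ x : Fin N → Bool, weight p x *
    (if ContainsCopy H (fun t => Q (histSeq (extSeq x) t)) (extSeq x) N then 1 else 0)

/-- `f(H,p)`: the least `N` such that some valid strategy finds a copy of `H`
within `N` queries with probability at least `1/2`. -/
noncomputable def fQuery {V : Type*} (H : SimpleGraph V) (p : ℝ) : ℕ :=
  sInf {N | ∃ Q : List Bool → Sym2 ℕ, ValidBuilder Q ∧ (1 : ℝ) / 2 ≤ queryProb H Q N p}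

/-- The complete graph on `m` vertices. -/
abbrev K (m : ℕ) : SimpleGraph (Fin m) := ⊤

/-! ### A finite product space and its expectation -/

abbrev E := Sym2 ℕ

noncomputable def bw (p : ℝ) (b : Bool) : ℝ := if b then p else 1 - p

lemma bw_sum (p : ℝ) : ∑ b, bw p b = 1 := by simp [bw]

noncomputable def extD (D : Finset E) (ω : D → Bool) : E → Bool :=
  fun e => if h : e ∈ D then ω ⟨e, h⟩ else false

noncomputable def Ex (p : ℝ) (D : Finset E) (f : (E → Bool) → ℝ) : ℝ :=
  ∑ ω : D → Bool, (∏ d, bw p (ω d)) * f (extD D ω)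

lemma Ex_mono {p : ℝ} (hp : 0 < p) (hp1 : p < 1) (D : Finset E) {f g : (E → Bool) → ℝ}
    (h : ∀ ω, f ω ≤ g ω) : Ex p D f ≤ Ex p D g := by
  unfold Ex
  refine Finset.sum_le_sum fun ω _ => mul_le_mul_of_nonneg_left (h _) ?_
  refine Finset.prod_nonneg fun d _ => ?_
  unfold bw
  split_ifs <;> linarith

lemma Ex_add (p : ℝ) (D : Finset E) (f g : (E → Bool) → ℝ) :
    Ex p D (fun ω => f ω + g ω) = Ex p D f + Ex p D g := by
  simp [Ex, mul_add, Finset.sum_add_distrib]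

lemma Ex_smul (p : ℝ) (D : Finset E) (c : ℝ) (f : (E → Bool) → ℝ) :
    Ex p D (fun ω => c * f ω) = c * Ex p D f := by
  simp only [Ex, Finset.mul_sum]
  exact Finset.sum_congr rfl fun ω _ => by ring

lemma Ex_sum {ι : Type*} (p : ℝ) (D : Finset E) (s : Finset ι) (f : ι → (E → Bool) → ℝ) :
    Ex p D (fun ω => ∑ i ∈ s, f i ω) = ∑ i ∈ s, Ex p D (f i) := by
  simp only [Ex, Finset.mul_sum]
  exact Finset.sum_comm

lemma Ex_cyl (p : ℝ) (D T : Finset E) (hT : T ⊆ D) (g : E → Bool) :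
    Ex p D (fun ω => if ∀ e ∈ T, ω e = g e then 1 else 0) = ∏ e ∈ T, bw p (g e) := by
  have key : ∀ ω : D → Bool, (∏ d, bw p (ω d)) *
      (if ∀ e ∈ T, extD D ω e = g e then (1 : ℝ) else 0) =
      ∏ d : D, (bw p (ω d) * if (d : E) ∈ T → ω d = g d then 1 else 0) := by
    intro ω
    rw [Finset.prod_mul_distrib]
    congr 1
    rw [Finset.prod_ite_zero]
    simp only [Finset.prod_const_one]
    congr 1
    simp only [Finset.mem_univ, true_imp_iff, Subtype.forall, eq_iff_iff]
    constructor
    · intro h e he heT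
      have := h e heT
      simpa [extD, he] using this
    · intro h e heT
      have := h e (hT heT) heT
      simpa [extD, hT heT] using this
  unfold Ex
  rw [Finset.sum_congr rfl fun ω _ => key ω]
  have h2 := (Finset.prod_univ_sum (fun _ : D => (Finset.univ : Finset Bool))
    (fun d b => bw p b * if (d : E) ∈ T → b = g d then 1 else 0)).symm
  rw [Fintype.piFinset_univ] at h2
  rw [h2]
  rw [Finset.prod_coe_sort D (fun d => ∑ b : Bool, (bw p b * if d ∈ T → b = g d then 1 else 0))]
  rw [← Finset.prod_subset hT]
  · refine Finset.prod_congr rfl fun e he => ?_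
    simp [he]
  · intro e _ he
    simp [he, bw]

lemma Ex_one (p : ℝ) (D : Finset E) : Ex p D (fun _ => 1) = 1 := by
  have := Ex_cyl p D ∅ (by simp) (fun _ => true)
  simpa using this

lemma Ex_true (p : ℝ) (D T : Finset E) (hT : T ⊆ D) :
    Ex p D (fun ω => if ∀ e ∈ T, ω e = true then 1 else 0) = p ^ T.card := by
  rw [Ex_cyl p D T hT (fun _ => true)]
  simp [bw]

/-! ### Strategies obtained by scanning a list of pairs -/

noncomputable def nextQ (cond : Finset E → E → Prop) : List E → Finset E → List Bool → Option E
  | [], _, _ => none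
  | e :: l, F, h => if cond F e then
      (match h with
        | [] => some e
        | b :: h' => nextQ cond l (if b then insert e F else F) h')
      else nextQ cond l F h

noncomputable def qs (cond : Finset E → E → Prop) (ω : E → Bool) : List E → Finset E → List E
  | [], _ => []
  | e :: l, F => if cond F e then e :: qs cond ω l (if ω e then insert e F else F)
      else qs cond ω l F

lemma nextQ_mem (cond : Finset E → E → Prop) (l : List E) : ∀ (F : Finset E) (h : List Bool) (e : E),
    nextQ cond l F h = some e → e ∈ l := by
  induction l with
  | nil => intro F h e he; simp [nextQ] at he
  | cons a l ih =>
    intro F h e he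
    by_cases hc : cond F a
    · cases h with
      | nil => simp [nextQ, hc] at he; simp [he]
      | cons b h' =>
        simp only [nextQ, hc, if_true] at he
        exact List.mem_cons_of_mem _ (ih _ _ _ he)
    · simp only [nextQ, hc, if_false] at he
      exact List.mem_cons_of_mem _ (ih _ _ _ he)

lemma nextQ_ne (cond : Finset E → E → Prop) (l : List E) (hl : l.Nodup) :
    ∀ (F : Finset E) (h : List Bool) (e : E) (i : ℕ), i < h.length →
    nextQ cond l F (h.take i) = some e → nextQ cond l F h ≠ some e := by
  induction l with
  | nil => intro F h e i hi he; simp [nextQ] at he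
  | cons a l ih =>
    intro F h e i hi he
    rw [List.nodup_cons] at hl
    by_cases hc : cond F a
    · cases h with
      | nil => simp at hi
      | cons b h' =>
        cases i with
        | zero =>
          simp [nextQ, hc] at he
          subst he
          simp only [nextQ, hc, if_true]
          intro h2
          exact hl.1 (nextQ_mem _ _ _ _ _ h2)
        | succ i =>
          simp only [List.take_succ_cons, nextQ, hc, if_true] at he ⊢
          exact ih hl.2 _ _ _ i (by simpa using hi) he
    · simp only [nextQ, hc, if_false] at he ⊢
      exact ih hl.2 _ _ _ i hi he

lemma nextQ_qs (cond : Finset E → E → Prop) (ω : E → Bool) (l : List E) :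
    ∀ (F : Finset E) (t : ℕ),
    nextQ cond l F (((qs cond ω l F).take t).map ω) = (qs cond ω l F)[t]? := by
  induction l with
  | nil => intro F t; simp [nextQ, qs]
  | cons a l ih =>
    intro F t
    by_cases hc : cond F a
    · cases t with
      | zero => simp [nextQ, qs, hc]
      | succ t => simpa [nextQ, qs, hc] using ih (if ω a then insert a F else F) t
    · simp only [nextQ, qs, hc, if_false, ih]

lemma qs_sublist (cond : Finset E → E → Prop) (ω : E → Bool) (l : List E) :
    ∀ (F : Finset E), List.Sublist (qs cond ω l F) l := by
  induction l with
  | nil => intro F; simp [qs]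
  | cons a l ih =>
    intro F
    by_cases hc : cond F a
    · simp only [qs, hc, if_true]
      exact (ih _).cons_cons a
    · simp only [qs, hc, if_false]
      exact (ih _).cons a

/-- every queried pair satisfies the condition for some set of true pairs -/
lemma qs_cond (cond : Finset E → E → Prop) (ω : E → Bool) (l : List E) :
    ∀ (F : Finset E), (∀ e ∈ F, ω e = true) → ∀ e ∈ qs cond ω l F,
      ∃ F' : Finset E, (∀ e ∈ F', ω e = true) ∧ cond F' e := by
  induction l with
  | nil => intro F _ e he; simp [qs] at he
  | cons a l ih =>
    intro F hF e he
    by_cases hc : cond F a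
    · simp only [qs, hc, if_true, List.mem_cons] at he
      rcases he with rfl | he
      · exact ⟨F, hF, hc⟩
      · refine ih _ ?_ e he
        intro e' he'
        split_ifs at he' with h
        · rcases Finset.mem_insert.1 he' with rfl | h'
          · exact h
          · exact hF _ h'
        · exact hF _ he'
    · simp only [qs, hc, if_false] at he
      exact ih F hF e he

lemma qs_complete (cond : Finset E → E → Prop) (ω : E → Bool) (stage : E → ℕ) (T : Finset E)
    (hT : ∀ e ∈ T, ω e = true)
    (hc : ∀ F : Finset E, ∀ e ∈ T, (∀ e' ∈ T, stage e' < stage e → e' ∈ F) → cond F e)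
    (l : List E) (hl : l.Pairwise (fun x y => stage x ≤ stage y)) :
    ∀ (F : Finset E), (∀ e ∈ T, e ∈ F ∨ e ∈ l) → ∀ e ∈ T, e ∈ F ∨ e ∈ qs cond ω l F := by
  induction l with
  | nil => intro F h e he; simpa [qs] using h e he
  | cons a l ih =>
    intro F hF e he
    rw [List.pairwise_cons] at hl
    by_cases haT : a ∈ T
    · have hca : cond F a := by
        refine hc F a haT fun e' he' hlt => ?_
        rcases hF e' he' with h | h
        · exact h
        · rcases List.mem_cons.1 h with rfl | h
          · omega
          · have := hl.1 _ h
            omega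
      have hωa := hT a haT
      simp only [qs, hca, if_true, hωa, List.mem_cons]
      have := ih hl.2 (insert a F) (by
        intro e' he'
        rcases hF e' he' with h | h
        · left; exact Finset.mem_insert_of_mem h
        · rcases List.mem_cons.1 h with rfl | h
          · left; exact Finset.mem_insert_self _ _
          · right; exact h) e he
      rcases this with h | h
      · rcases Finset.mem_insert.1 h with rfl | h
        · right; left; rfl
        · left; exact h
      · right; right; exact h
    · by_cases hca : cond F a
      · simp only [qs, hca, if_true, List.mem_cons]
        set F' := if ω a = true then insert a F else F with hF'
        have hsub : F ⊆ F' := by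
          rw [hF']; split_ifs
          · exact Finset.subset_insert _ _
          · exact subset_rfl
        have := ih hl.2 F' (by
          intro e' he'
          rcases hF e' he' with h | h
          · left; exact hsub h
          · rcases List.mem_cons.1 h with rfl | h
            · exact absurd he' haT
            · right; exact h) e he
        rcases this with h | h
        · left
          rw [hF'] at h
          split_ifs at h
          · rcases Finset.mem_insert.1 h with rfl | h
            · exact absurd he haT
            · exact h
          · exact h
        · right; right; exact h
      · simp only [qs, hca, if_false]
        refine ih hl.2 F ?_ e he
        intro e' he'
        rcases hF e' he' with h | h
        · left; exact h
        · rcases List.mem_cons.1 h with rfl | h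
          · exact absurd he' haT
          · right; exact h

noncomputable def stratQ (cond : Finset E → E → Prop) (L : List E) (M : ℕ) (h : List Bool) : E :=
  match nextQ cond L ∅ h with
  | some e => e
  | none => s(M, M + 1 + h.length)

lemma stratQ_valid (cond : Finset E → E → Prop) (L : List E) (M : ℕ) (hnd : L.Nodup)
    (hd : ∀ e ∈ L, ¬ e.IsDiag) (hM : ∀ e ∈ L, M ∉ e) : ValidBuilder (stratQ cond L M) := by
  refine ⟨?_, ?_⟩
  · intro h
    unfold stratQ
    cases hq : nextQ cond L ∅ h with
    | none => simp; omega
    | some e => exact hd e (nextQ_mem _ _ _ _ _ hq)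
  · intro h i hi heq
    unfold stratQ at heq
    cases hq : nextQ cond L ∅ h with
    | none =>
      cases hq2 : nextQ cond L ∅ (h.take i) with
      | none =>
        simp only [hq, hq2, List.length_take] at heq
        rw [Sym2.eq_iff] at heq
        omega
      | some e =>
        simp only [hq, hq2] at heq
        have := hM e (nextQ_mem _ _ _ _ _ hq2)
        rw [heq] at this
        simp at this
    | some e =>
      cases hq2 : nextQ cond L ∅ (h.take i) with
      | none =>
        simp only [hq, hq2] at heq
        have := hM e (nextQ_mem _ _ _ _ _ hq)
        rw [← heq] at this
        simp at this
      | some e' =>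
        simp only [hq, hq2] at heq
        subst heq
        exact nextQ_ne cond L hnd _ _ _ _ hi hq2 hq

/-- history of a strategy `Q` run on the fixed graph `ω` -/
def histQ (Q : List Bool → E) (ω : E → Bool) : ℕ → List Bool
  | 0 => []
  | t + 1 => histQ Q ω t ++ [ω (Q (histQ Q ω t))]

lemma histSeq_histQ (Q : List Bool → E) (ω : E → Bool) (x : ℕ → Bool) (N : ℕ)
    (hx : ∀ t < N, x t = ω (Q (histQ Q ω t))) (t : ℕ) (ht : t ≤ N) :
    histSeq x t = histQ Q ω t := by
  induction t with
  | zero => simp [histSeq, histQ]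
  | succ t ih =>
    have := ih (by omega)
    simp only [histSeq, histQ, List.range_succ, List.map_append, List.map_cons, List.map_nil] at this ⊢
    rw [this, hx t (by omega)]

lemma histQ_strat (cond : Finset E → E → Prop) (L : List E) (M : ℕ) (ω : E → Bool) (t : ℕ)
    (ht : t ≤ (qs cond ω L ∅).length) :
    histQ (stratQ cond L M) ω t = ((qs cond ω L ∅).take t).map ω := by
  induction t with
  | zero => simp [histQ]
  | succ t ih =>
    have ih' := ih (by omega)
    simp only [histQ]
    rw [ih']
    have hlt : t < (qs cond ω L ∅).length := by omega
    have hq := nextQ_qs cond ω L ∅ t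
    rw [List.getElem?_eq_getElem hlt] at hq
    have : stratQ cond L M (((qs cond ω L ∅).take t).map ω) = (qs cond ω L ∅)[t] := by
      unfold stratQ; rw [hq]
    rw [this, List.take_succ_eq_append_getElem hlt, List.map_append, List.map_cons, List.map_nil]

lemma stratQ_finds (cond : Finset E → E → Prop) (L : List E) (M : ℕ) (ω : E → Bool) (e : E)
    (he : e ∈ qs cond ω L ∅) :
    ∃ t < (qs cond ω L ∅).length, stratQ cond L M (histQ (stratQ cond L M) ω t) = e := by
  obtain ⟨t, ht, rfl⟩ := List.mem_iff_getElem.1 he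
  refine ⟨t, ht, ?_⟩
  rw [histQ_strat cond L M ω t ht.le]
  have hq := nextQ_qs cond ω L ∅ t
  rw [List.getElem?_eq_getElem ht] at hq
  unfold stratQ; rw [hq]

lemma game_bound {V : Type*} (H : SimpleGraph V) (cond : Finset E → E → Prop) (L : List E)
    (hnd : L.Nodup) (hd : ∀ e ∈ L, ¬ e.IsDiag) (N : ℕ) (p : ℝ) (hp : 0 < p) (hp1 : p < 1)
    (good : (E → Bool) → Prop)
    (hgood : ∀ ω, good ω → (qs cond ω L ∅).length ≤ N ∧ ∃ f : V → ℕ, Function.Injective f ∧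
      ∀ u v, H.Adj u v → s(f u, f v) ∈ qs cond ω L ∅ ∧ ω s(f u, f v) = true) :
    ∃ Q, ValidBuilder Q ∧ ∃ D : Finset E, L.toFinset ⊆ D ∧
      Ex p D (fun ω => if good ω then 1 else 0) ≤ queryProb H Q N p := by
  obtain ⟨M, hM⟩ : ∃ M : ℕ, ∀ e ∈ L, M ∉ e := by
    obtain ⟨M, hM⟩ := Infinite.exists_notMem_finset (L.toFinset.biUnion fun e => e.toFinset)
    refine ⟨M, fun e he hMe => hM ?_⟩
    simp only [Finset.mem_biUnion, List.mem_toFinset, Sym2.mem_toFinset]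
    exact ⟨e, he, hMe⟩
  set Q := stratQ cond L M with hQ
  have hv : ValidBuilder Q := stratQ_valid cond L M hnd hd hM
  set ed : (Fin N → Bool) → Fin N → E := fun x t => Q (histSeq (extSeq x) t) with hed
  have hedinj : ∀ x, Function.Injective (ed x) := by
    have aux : ∀ x, ∀ i j : Fin N, i < j → ed x i ≠ ed x j := by
      intro x i j hij
      have := hv.2 (histSeq (extSeq x) j) i (by simpa [histSeq] using hij)
      have h2 : (histSeq (extSeq x) j).take i = histSeq (extSeq x) i := by
        simp only [histSeq, ← List.map_take, List.take_range]
        rw [min_eq_left (by exact_mod_cast hij.le)]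
      rw [h2] at this
      exact this
    intro x i j hij
    rcases lt_trichotomy i j with h | h | h
    · exact absurd hij (aux x i j h)
    · exact h
    · exact absurd hij.symm (aux x j i h)
  set D : Finset E := L.toFinset ∪ Finset.univ.biUnion (fun x => Finset.univ.image (ed x)) with hD
  refine ⟨Q, hv, D, Finset.subset_union_left, ?_⟩
  have hw : ∀ x : Fin N → Bool, weight p x =
      Ex p D (fun ω => if ∀ t, ω (ed x t) = x t then 1 else 0) := by
    intro x
    have := Ex_cyl p D (Finset.univ.image (ed x)) (by
      refine subset_trans ?_ Finset.subset_union_right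
      exact Finset.subset_biUnion_of_mem (fun x => Finset.univ.image (ed x)) (Finset.mem_univ x))
      (Function.extend (ed x) x (fun _ => false))
    rw [Finset.prod_image (fun i _ j _ h => hedinj x h)] at this
    simp only [Finset.mem_image, Finset.mem_univ, true_and, forall_exists_index,
      forall_apply_eq_imp_iff, (hedinj x).extend_apply] at this
    rw [this]
    rfl
  unfold queryProb
  have : (∑ x : Fin N → Bool, weight p x *
    (if ContainsCopy H (fun t => Q (histSeq (extSeq x) t)) (extSeq x) N then 1 else 0)) =
    Ex p D (fun ω => ∑ x : Fin N → Bool,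
      (if ContainsCopy H (fun t => Q (histSeq (extSeq x) t)) (extSeq x) N then 1 else 0) *
        (if ∀ t, ω (ed x t) = x t then 1 else 0)) := by
    rw [Ex_sum]
    refine Finset.sum_congr rfl fun x _ => ?_
    rw [Ex_smul, ← hw x, mul_comm]
  rw [this]
  refine Ex_mono hp hp1 D fun ω => ?_
  by_cases hg : good ω
  swap
  · simp only [hg, if_false]
    exact Finset.sum_nonneg fun x _ => by positivity
  simp only [hg, if_true]
  obtain ⟨hlen, f, hf, hfe⟩ := hgood ω hg
  set x : Fin N → Bool := fun t => ω (Q (histQ Q ω t)) with hx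
  have hx1 : ∀ t < N, extSeq x t = ω (Q (histQ Q ω t)) := by
    intro t ht
    simp [extSeq, ht, hx]
  have hx2 := histSeq_histQ Q ω (extSeq x) N hx1
  have hcopy : ContainsCopy H (fun t => Q (histSeq (extSeq x) t)) (extSeq x) N := by
    refine ⟨f, hf, fun u v huv => ?_⟩
    obtain ⟨h1, h2⟩ := hfe u v huv
    obtain ⟨t, ht, hte⟩ := stratQ_finds cond L M ω _ h1
    have htN : t < N := by omega
    refine ⟨t, htN, ?_, ?_⟩
    · show Q (histSeq (extSeq x) t) = _
      rw [hx2 t htN.le]; exact hte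
    · rw [hx1 t htN]
      rw [← hte] at h2
      exact h2
  have hcons : ∀ t, ω (ed x t) = x t := by
    intro t
    simp only [hed]
    rw [hx2 t t.2.le]
  have := Finset.single_le_sum (f := fun x : Fin N → Bool =>
      (if ContainsCopy H (fun t => Q (histSeq (extSeq x) t)) (extSeq x) N then (1 : ℝ) else 0) *
        (if ∀ t, ω (ed x t) = x t then 1 else 0)) (s := Finset.univ)
      (fun x _ => by positivity) (Finset.mem_univ x)
  simp only [hcopy, hcons, if_true] at this
  simpa using this

/-! ### The multipartite structure -/

section Multi

variable {m : ℕ}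

def ed (φ : Fin m → ℕ) (kl : Fin m × Fin m) : E :=
  s(Nat.pair kl.1 (φ kl.1), Nat.pair kl.2 (φ kl.2))

def prs (m : ℕ) : Finset (Fin m × Fin m) := Finset.univ.filter fun kl => kl.1 < kl.2

lemma mem_prs {kl : Fin m × Fin m} : kl ∈ prs m ↔ kl.1 < kl.2 := by simp [prs]

lemma ed_eq (φ ψ : Fin m → ℕ) {kl kl' : Fin m × Fin m} (h : kl ∈ prs m) (h' : kl' ∈ prs m) :
    ed φ kl = ed ψ kl' ↔ kl = kl' ∧ φ kl.1 = ψ kl.1 ∧ φ kl.2 = ψ kl.2 := by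
  rw [mem_prs] at h h'
  obtain ⟨k, l⟩ := kl
  obtain ⟨k', l'⟩ := kl'
  simp only [ed, Sym2.eq_iff, Nat.pair_eq_pair, Prod.mk.injEq] at *
  constructor
  · rintro (⟨⟨h1, h2⟩, h3, h4⟩ | ⟨⟨h1, h2⟩, h3, h4⟩)
    · have e1 := Fin.ext h1
      have e2 := Fin.ext h3
      subst e1 e2
      exact ⟨⟨rfl, rfl⟩, h2, h4⟩
    · have : k.val < l.val := h
      have : k'.val < l'.val := h'
      omega
  · rintro ⟨⟨rfl, rfl⟩, h2, h4⟩
    exact Or.inl ⟨⟨rfl, h2⟩, rfl, h4⟩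

def Aset (t : ℕ) (ij : Fin m × Fin m) : Finset (Fin m) :=
  Finset.univ.filter fun k => k.val < min ij.1.val t ∨ k = ij.1 ∨ k = ij.2

def Hset (t : ℕ) (ij : Fin m × Fin m) : Finset (Fin m × Fin m) :=
  (prs m).filter fun kl => kl.1.val < min ij.1.val t ∧ kl.2 ∈ Aset t ij

def box (n : Fin m → ℕ) (A : Finset (Fin m)) : Finset (Fin m → ℕ) :=
  Fintype.piFinset fun k => if k ∈ A then Finset.range (n k) else {0}

lemma mem_box {n : Fin m → ℕ} {A : Finset (Fin m)} {φ : Fin m → ℕ} :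
    φ ∈ box n A ↔ ∀ k, (k ∈ A → φ k < n k) ∧ (k ∉ A → φ k = 0) := by
  simp only [box, Fintype.mem_piFinset]
  refine forall_congr' fun k => ?_
  by_cases h : k ∈ A <;> simp [h]

lemma card_box (n : Fin m → ℕ) (A : Finset (Fin m)) : (box n A).card = ∏ k ∈ A, n k := by
  rw [box, Fintype.card_piFinset]
  have : ∀ k, (if k ∈ A then Finset.range (n k) else {0}).card = if k ∈ A then n k else 1 := by
    intro k; split_ifs <;> simp
  simp only [this]
  rw [Finset.prod_ite_mem]
  simp

lemma box_sub (n : Fin m → ℕ) (hn : ∀ k, 0 < n k) (A : Finset (Fin m)) :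
    box n A ⊆ box n Finset.univ := by
  intro φ hφ
  rw [mem_box] at *
  intro k
  refine ⟨fun _ => ?_, by simp⟩
  by_cases hk : k ∈ A
  · exact (hφ k).1 hk
  · rw [(hφ k).2 hk]; exact hn k

def cnd (n : Fin m → ℕ) (t : ℕ) (F : Finset E) (e : E) : Prop :=
  ∃ kl ∈ prs m, ∃ φ ∈ box n (Aset t kl), e = ed φ kl ∧ ∀ kl' ∈ Hset t kl, ed φ kl' ∈ F

def allE (n : Fin m → ℕ) : Finset E :=
  (prs m).biUnion fun kl => (box n Finset.univ).image fun φ => ed φ kl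

lemma mem_allE (n : Fin m → ℕ) {φ : Fin m → ℕ} (hφ : φ ∈ box n Finset.univ) {kl : Fin m × Fin m}
    (h : kl ∈ prs m) : ed φ kl ∈ allE n := by
  simp only [allE, Finset.mem_biUnion, Finset.mem_image]
  exact ⟨kl, h, φ, hφ, rfl⟩

lemma allE_nd (n : Fin m → ℕ) : ∀ e ∈ allE n, ¬ e.IsDiag := by
  intro e he
  simp only [allE, Finset.mem_biUnion, Finset.mem_image] at he
  obtain ⟨kl, h, φ, hφ, rfl⟩ := he
  rw [mem_prs] at h
  simp only [ed, Sym2.mk_isDiag_iff, Nat.pair_eq_pair]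
  rintro ⟨h1, _⟩
  have := Fin.ext h1
  omega

def stage (t : ℕ) : E → ℕ :=
  Sym2.lift ⟨fun a b => min (min a.unpair.1 b.unpair.1) t, fun a b => by
    show min (min a.unpair.1 b.unpair.1) t = min (min b.unpair.1 a.unpair.1) t
    rw [min_comm a.unpair.1]⟩

lemma stage_ed (t : ℕ) (φ : Fin m → ℕ) {kl : Fin m × Fin m} (h : kl ∈ prs m) :
    stage t (ed φ kl) = min kl.1.val t := by
  rw [mem_prs] at h
  simp only [stage, ed, Sym2.lift_mk, Nat.unpair_pair]
  have : kl.1.val < kl.2.val := h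
  omega

lemma exists_list (n : Fin m → ℕ) (t : ℕ) : ∃ L : List E, L.Nodup ∧ L.toFinset = allE n ∧
    L.Pairwise (fun x y => stage t x ≤ stage t y) := by
  have : Std.Total (fun x y : E => stage t x ≤ stage t y) := ⟨fun x y => le_total _ _⟩
  have : IsTrans E (fun x y : E => stage t x ≤ stage t y) := ⟨fun x y z => le_trans⟩
  refine ⟨(allE n).toList.insertionSort (fun x y => stage t x ≤ stage t y), ?_, ?_, ?_⟩
  · exact (List.perm_insertionSort _ _).nodup_iff.2 (Finset.nodup_toList _)
  · ext e
    simp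
  · exact List.pairwise_insertionSort _ _

lemma qs_clique (n : Fin m → ℕ) (t : ℕ) (ω : E → Bool)
    (L : List E) (hL : L.toFinset = allE n) (hs : L.Pairwise (fun x y => stage t x ≤ stage t y))
    (φ : Fin m → ℕ) (hφ : φ ∈ box n Finset.univ) (hω : ∀ kl ∈ prs m, ω (ed φ kl) = true) :
    ∀ kl ∈ prs m, ed φ kl ∈ qs (cnd n t) ω L ∅ := by
  intro kl hkl
  have := qs_complete (cnd n t) ω (stage t) ((prs m).image (ed φ)) ?_ ?_ L hs ∅ ?_ (ed φ kl)
    (Finset.mem_image_of_mem _ hkl)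
  · simpa using this
  · intro e he
    obtain ⟨kl', h, rfl⟩ := Finset.mem_image.1 he
    exact hω _ h
  · intro F e he hF
    obtain ⟨ij, h, rfl⟩ := Finset.mem_image.1 he
    have hag : ∀ ab : Fin m × Fin m, ab.1 ∈ Aset t ij → ab.2 ∈ Aset t ij →
        ed (fun k => if k ∈ Aset t ij then φ k else 0) ab = ed φ ab := by
      intro ab h1 h2
      simp [ed, h1, h2]
    refine ⟨ij, h, fun k => if k ∈ Aset t ij then φ k else 0, ?_, ?_, ?_⟩
    · rw [mem_box]
      intro k
      refine ⟨fun hk => ?_, fun hk => by simp [hk]⟩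
      simp only [hk, if_true]
      exact ((mem_box.1 hφ) k).1 (Finset.mem_univ _)
    · rw [hag] <;> simp [Aset]
    · intro ab hab
      obtain ⟨hab1, hab2, hab3⟩ := Finset.mem_filter.1 hab
      rw [hag ab (by simp only [Aset, Finset.mem_filter, Finset.mem_univ, true_and]; exact Or.inl hab2) hab3]
      refine hF _ (Finset.mem_image_of_mem _ hab1) ?_
      rw [stage_ed t φ hab1, stage_ed t φ h]
      omega
  · intro e he
    right
    obtain ⟨kl', h, rfl⟩ := Finset.mem_image.1 he
    rw [← List.mem_toFinset, hL]
    exact mem_allE n hφ h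

noncomputable def ind (ω : E → Bool) (T : Finset E) : ℝ := if ∀ e ∈ T, ω e = true then 1 else 0

lemma qs_length (n : Fin m → ℕ) (t : ℕ) (ω : E → Bool) (L : List E) (hnd : L.Nodup) :
    ((qs (cnd n t) ω L ∅).length : ℝ) ≤
      ∑ kl ∈ prs m, ∑ φ ∈ box n (Aset t kl), ind ω ((Hset t kl).image (ed φ)) := by
  have h1 : (qs (cnd n t) ω L ∅).Nodup := (qs_sublist (cnd n t) ω L ∅).nodup hnd
  rw [← List.toFinset_card_of_nodup h1]
  have hsub : (qs (cnd n t) ω L ∅).toFinset ⊆ (prs m).biUnion fun kl =>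
      ((box n (Aset t kl)).filter (fun φ => ∀ e ∈ (Hset t kl).image (ed φ), ω e = true)).image
        (fun φ => ed φ kl) := by
    intro e he
    rw [List.mem_toFinset] at he
    obtain ⟨F, hF, kl, hkl, φ, hφ, rfl, hH⟩ := qs_cond (cnd n t) ω L ∅ (by simp) e he
    simp only [Finset.mem_biUnion, Finset.mem_image, Finset.mem_filter]
    refine ⟨kl, hkl, φ, ⟨hφ, ?_⟩, rfl⟩
    rintro e ⟨ab, hab, rfl⟩
    exact hF _ (hH _ hab)
  have h2 := (Finset.card_le_card hsub).trans Finset.card_biUnion_le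
  calc _ ≤ ((∑ kl ∈ prs m, (((box n (Aset t kl)).filter (fun φ => ∀ e ∈ (Hset t kl).image (ed φ), ω e = true)).image
        (fun φ => ed φ kl)).card : ℕ) : ℝ) := by exact_mod_cast h2
    _ ≤ _ := by
      push_cast
      refine Finset.sum_le_sum fun kl _ => ?_
      simp only [ind]
      rw [Finset.sum_boole]
      exact_mod_cast Finset.card_image_le

lemma card_image_ed (φ : Fin m → ℕ) (H : Finset (Fin m × Fin m)) (hH : H ⊆ prs m) :
    (H.image (ed φ)).card = H.card := by
  refine Finset.card_image_of_injOn fun a ha b hb h => ?_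
  exact ((ed_eq φ φ (hH ha) (hH hb)).1 h).1

lemma Ex_Y (n : Fin m → ℕ) (hn : ∀ k, 0 < n k) (t : ℕ) (p : ℝ) (D : Finset E) (hD : allE n ⊆ D) :
    Ex p D (fun ω => ∑ kl ∈ prs m, ∑ φ ∈ box n (Aset t kl), ind ω ((Hset t kl).image (ed φ))) =
      ∑ kl ∈ prs m, (∏ k ∈ Aset t kl, (n k : ℝ)) * p ^ (Hset t kl).card := by
  rw [Ex_sum]
  refine Finset.sum_congr rfl fun kl _ => ?_
  rw [Ex_sum]
  have hsub : Hset t kl ⊆ prs m := Finset.filter_subset _ _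
  have : ∀ φ ∈ box n (Aset t kl), Ex p D (fun ω => ind ω ((Hset t kl).image (ed φ))) =
      p ^ (Hset t kl).card := by
    intro φ hφ
    simp only [ind]
    rw [Ex_true, card_image_ed φ _ hsub]
    refine subset_trans ?_ hD
    intro e he
    obtain ⟨ab, hab, rfl⟩ := Finset.mem_image.1 he
    exact mem_allE n (box_sub n hn _ hφ) (hsub hab)
  rw [Finset.sum_congr rfl this, Finset.sum_const, card_box]
  simp

noncomputable def cnt (n : Fin m → ℕ) (ω : E → Bool) : ℝ :=
  ∑ φ ∈ box n Finset.univ, ind ω ((prs m).image (ed φ))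

lemma Ex_cnt (n : Fin m → ℕ) (p : ℝ) (D : Finset E) (hD : allE n ⊆ D) :
    Ex p D (cnt n) = (∏ k, (n k : ℝ)) * p ^ (prs m).card := by
  unfold cnt
  rw [Ex_sum]
  have : ∀ φ ∈ box n Finset.univ, Ex p D (fun ω => ind ω ((prs m).image (ed φ))) =
      p ^ (prs m).card := by
    intro φ hφ
    simp only [ind]
    rw [Ex_true, card_image_ed φ _ subset_rfl]
    refine subset_trans ?_ hD
    intro e he
    obtain ⟨ab, hab, rfl⟩ := Finset.mem_image.1 he
    exact mem_allE n hφ hab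
  rw [Finset.sum_congr rfl this, Finset.sum_const, card_box]
  simp

lemma ind_mul (ω : E → Bool) (S T : Finset E) : ind ω S * ind ω T = ind ω (S ∪ T) := by
  simp only [ind, Finset.mem_union, or_imp, forall_and]
  by_cases h1 : ∀ e ∈ S, ω e = true
  · by_cases h2 : ∀ e ∈ T, ω e = true
    · rw [if_pos h1, if_pos h2, if_pos ⟨h1, h2⟩, one_mul]
    · rw [if_neg h2, mul_zero, if_neg (fun h => h2 h.2)]
  · rw [if_neg h1, zero_mul, if_neg (fun h => h1 h.1)]

lemma card_pairs_in (S : Finset (Fin m)) :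
    ((prs m).filter fun kl => kl.1 ∈ S ∧ kl.2 ∈ S).card ≤ S.card.choose 2 := by
  rw [← Finset.card_powersetCard]
  refine Finset.card_le_card_of_injOn (fun kl => {kl.1, kl.2}) ?_ ?_
  · intro kl hkl
    simp only [Finset.coe_filter, Set.mem_ofPred_eq, mem_prs] at hkl
    simp only [Finset.mem_coe, Finset.mem_powersetCard]
    refine ⟨?_, Finset.card_pair hkl.1.ne⟩
    intro x hx
    simp only [Finset.mem_insert, Finset.mem_singleton] at hx
    rcases hx with rfl | rfl
    · exact hkl.2.1
    · exact hkl.2.2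
  · rintro ⟨a, b⟩ h ⟨a', b'⟩ h' heq
    simp only [Finset.coe_filter, Set.mem_ofPred_eq, mem_prs] at h h'
    simp only at heq
    have h1 : a ∈ ({a', b'} : Finset _) := heq ▸ (by simp)
    have h2 : b ∈ ({a', b'} : Finset _) := heq ▸ (by simp)
    simp only [Finset.mem_insert, Finset.mem_singleton] at h1 h2
    have g := h.1
    have g' := h'.1
    ext <;> simp only <;> omega

lemma card_agree (n : Fin m → ℕ) (S : Finset (Fin m)) (φ : Fin m → ℕ) (hφ : φ ∈ box n Finset.univ) :
    ((box n Finset.univ).filter fun ψ => ∀ k ∈ S, φ k = ψ k).card * ∏ k ∈ S, n k = ∏ k, n k := by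
  have : ((box n Finset.univ).filter fun ψ => ∀ k ∈ S, φ k = ψ k) =
      Fintype.piFinset fun k => if k ∈ S then {φ k} else Finset.range (n k) := by
    ext ψ
    simp only [Finset.mem_filter, mem_box, Fintype.mem_piFinset, Finset.mem_univ, true_imp_iff,
      not_true_eq_false, false_imp_iff, and_true] at hφ ⊢
    constructor
    · rintro ⟨h1, h2⟩ k
      by_cases hk : k ∈ S
      · simp [hk, h2 k hk]
      · simp [hk, h1 k]
    · intro h
      refine ⟨fun k => ?_, fun k hk => ?_⟩
      · have := h k
        by_cases hk : k ∈ S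
        · simp [hk] at this; rw [this]; exact hφ k
        · simpa [hk] using this
      · have := h k
        simp [hk] at this
        exact this.symm
  rw [this, Fintype.card_piFinset]
  have h2 : ∀ k, (if k ∈ S then {φ k} else Finset.range (n k)).card = if k ∈ S then 1 else n k := by
    intro k; split_ifs <;> simp
  simp only [h2]
  have h3 : ∏ k ∈ S, n k = ∏ k, if k ∈ S then n k else 1 := by
    rw [Finset.prod_ite_mem]; simp
  rw [h3, ← Finset.prod_mul_distrib]
  refine Finset.prod_congr rfl fun k _ => ?_
  split_ifs <;> simp

lemma Ex_cnt_sq (n : Fin m → ℕ) (hn : ∀ k, 0 < n k) (p : ℝ) (hp : 0 < p) (hp1 : p < 1)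
    (D : Finset E) (hD : allE n ⊆ D) :
    Ex p D (fun ω => cnt n ω ^ 2) ≤ ((∏ k, (n k : ℝ)) * p ^ (prs m).card) ^ 2 *
      ∑ S : Finset (Fin m), ((∏ k ∈ S, (n k : ℝ)) * p ^ (S.card.choose 2))⁻¹ := by
  have hsq : (fun ω => cnt n ω ^ 2) = fun ω => ∑ φ ∈ box n Finset.univ, ∑ ψ ∈ box n Finset.univ,
      ind ω ((prs m).image (ed φ) ∪ (prs m).image (ed ψ)) := by
    funext ω
    rw [cnt, sq, Finset.sum_mul_sum]
    simp only [ind_mul]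
  rw [hsq, Ex_sum]
  have hT : ∀ φ ∈ box n Finset.univ, (prs m).image (ed φ) ⊆ D := by
    intro φ hφ
    refine subset_trans ?_ hD
    intro e he
    obtain ⟨ab, hab, rfl⟩ := Finset.mem_image.1 he
    exact mem_allE n hφ hab
  have hpi : 1 ≤ p⁻¹ := (one_le_inv₀ hp).2 hp1.le
  have hpair : ∀ φ ∈ box n Finset.univ, ∀ ψ ∈ box n Finset.univ,
      Ex p D (fun ω => ind ω ((prs m).image (ed φ) ∪ (prs m).image (ed ψ))) ≤
      ∑ S : Finset (Fin m), if ∀ k ∈ S, φ k = ψ k then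
        p ^ (2 * (prs m).card) * p⁻¹ ^ (S.card.choose 2) else 0 := by
    intro φ hφ ψ hψ
    simp only [ind]
    rw [Ex_true _ _ _ (Finset.union_subset (hT φ hφ) (hT ψ hψ))]
    set S : Finset (Fin m) := Finset.univ.filter fun k => φ k = ψ k with hS
    have hint : ((prs m).image (ed φ) ∩ (prs m).image (ed ψ)).card ≤ S.card.choose 2 := by
      refine le_trans ?_ (card_pairs_in S)
      have : (prs m).image (ed φ) ∩ (prs m).image (ed ψ) ⊆
          ((prs m).filter fun kl => kl.1 ∈ S ∧ kl.2 ∈ S).image (ed φ) := by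
        intro e he
        obtain ⟨h1, h2⟩ := Finset.mem_inter.1 he
        obtain ⟨a, ha, rfl⟩ := Finset.mem_image.1 h1
        obtain ⟨b, hb, hab⟩ := Finset.mem_image.1 h2
        obtain ⟨g1, g2, g3⟩ := (ed_eq φ ψ ha hb).1 hab.symm
        refine Finset.mem_image_of_mem _ ?_
        simp [ha, hS, g2, g3]
      exact (Finset.card_le_card this).trans Finset.card_image_le
    have hun := Finset.card_union_add_card_inter ((prs m).image (ed φ)) ((prs m).image (ed ψ))
    rw [card_image_ed φ _ subset_rfl, card_image_ed ψ _ subset_rfl] at hun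
    have hle : p ^ ((prs m).image (ed φ) ∪ (prs m).image (ed ψ)).card ≤
        p ^ (2 * (prs m).card) * p⁻¹ ^ (S.card.choose 2) := by
      have h2 : 2 * (prs m).card = ((prs m).image (ed φ) ∪ (prs m).image (ed ψ)).card +
        ((prs m).image (ed φ) ∩ (prs m).image (ed ψ)).card := by omega
      rw [h2, pow_add, mul_assoc]
      refine le_mul_of_one_le_right (by positivity) ?_
      set c := ((prs m).image (ed φ) ∩ (prs m).image (ed ψ)).card
      calc (1 : ℝ) = p ^ c * p⁻¹ ^ c := by
            rw [← mul_pow, mul_inv_cancel₀ hp.ne', one_pow]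
        _ ≤ _ := by
            refine mul_le_mul_of_nonneg_left ?_ (by positivity)
            exact pow_le_pow_right₀ hpi hint
    refine hle.trans ?_
    have hsing := Finset.single_le_sum (f := fun S : Finset (Fin m) =>
      if ∀ k ∈ S, φ k = ψ k then p ^ (2 * (prs m).card) * p⁻¹ ^ (S.card.choose 2) else 0)
      (s := Finset.univ) (fun S _ => by positivity) (Finset.mem_univ S)
    have hSall : ∀ k ∈ S, φ k = ψ k := by intro k hk; simpa [hS] using hk
    simp only [if_pos hSall] at hsing
    exact hsing
  calc _ ≤ ∑ φ ∈ box n Finset.univ, ∑ ψ ∈ box n Finset.univ,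
        ∑ S : Finset (Fin m), if ∀ k ∈ S, φ k = ψ k then
        p ^ (2 * (prs m).card) * p⁻¹ ^ (S.card.choose 2) else 0 := by
        refine Finset.sum_le_sum fun φ hφ => ?_
        rw [Ex_sum]
        exact Finset.sum_le_sum fun ψ hψ => hpair φ hφ ψ hψ
    _ = ∑ φ ∈ box n Finset.univ, ∑ S : Finset (Fin m), (∏ k, (n k : ℝ)) * p ^ (2 * (prs m).card) *
        ((∏ k ∈ S, (n k : ℝ)) * p ^ (S.card.choose 2))⁻¹ := by
        refine Finset.sum_congr rfl fun φ hφ => ?_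
        rw [Finset.sum_comm]
        refine Finset.sum_congr rfl fun S _ => ?_
        rw [← Finset.sum_filter, Finset.sum_const, nsmul_eq_mul]
        have hc := card_agree n S φ hφ
        have hc' : ((((box n Finset.univ).filter fun ψ => ∀ k ∈ S, φ k = ψ k).card : ℕ) : ℝ) *
          ∏ k ∈ S, (n k : ℝ) = ∏ k, (n k : ℝ) := by exact_mod_cast hc
        have hpos : 0 < ∏ k ∈ S, (n k : ℝ) := Finset.prod_pos fun k _ => by exact_mod_cast hn k
        rw [← hc', inv_pow]
        field_simp
    _ = _ := by
        rw [Finset.sum_const, card_box, ← Finset.mul_sum, nsmul_eq_mul]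
        push_cast
        ring

lemma card_Hset (t : ℕ) (ij : Fin m × Fin m) :
    (Hset t ij).card = ∑ l ∈ Aset t ij, min l.val (min ij.1.val t) := by
  have h1 : Hset t ij = (Aset t ij).biUnion fun l =>
      (Finset.univ.filter fun k : Fin m => k.val < min l.val (min ij.1.val t)).image fun k => (k, l) := by
    ext ⟨k, l⟩
    simp only [Hset, Finset.mem_filter, mem_prs, Finset.mem_biUnion, Finset.mem_image,
      Finset.mem_univ, true_and, Prod.mk.injEq]
    constructor
    · rintro ⟨h1, h2, h3⟩
      refine ⟨l, h3, k, ?_, rfl, rfl⟩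
      have : k.val < l.val := h1
      omega
    · rintro ⟨l', h3, k', h4, rfl, rfl⟩
      refine ⟨?_, by omega, h3⟩
      show k'.val < l'.val
      omega
  rw [h1, Finset.card_biUnion]
  · refine Finset.sum_congr rfl fun l _ => ?_
    rw [Finset.card_image_of_injective _ (fun a b h => by simpa using h)]
    rw [Fin.card_filter_val_lt]
    have := l.2
    omega
  · intro l _ l' _ hne
    rw [Function.onFun, Finset.disjoint_left]
    rintro ⟨a, b⟩ h1 h2
    simp only [Finset.mem_image, Prod.mk.injEq] at h1 h2
    obtain ⟨_, _, _, rfl⟩ := h1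
    obtain ⟨_, _, _, h⟩ := h2
    exact hne h.symm

end Multi

lemma main_abs (m t : ℕ) (a : Fin m → ℝ) (b : ℝ) (ha0 : ∀ k, 0 ≤ a k) (hb : 0 ≤ b)
    (hS : ∀ S : Finset (Fin m), ((S.card.choose 2 : ℕ) : ℝ) ≤ ∑ k ∈ S, a k)
    (hc : ∀ ij ∈ prs m, ∑ k ∈ Aset t ij, a k ≤ b + ((Hset t ij).card : ℝ)) :
    ∃ C : ℝ, 0 < C ∧ ∀ p : ℝ, p ∈ Set.Ioo (0 : ℝ) 1 → (fQuery (K m) p : ℝ) ≤ C * p ^ (-b) := by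
  set K0 : ℝ := 2 ^ (m + 2) with hK0
  have hK1 : 1 ≤ K0 := one_le_pow₀ (by norm_num)
  set C0 : ℝ := (prs m).card * (2 * K0) ^ m with hC0
  have hC0n : 0 ≤ C0 := by positivity
  refine ⟨4 * C0 + 2, by positivity, ?_⟩
  rintro p ⟨hp, hp1⟩
  have hpge : ∀ x : ℝ, 0 ≤ x → 1 ≤ p ^ (-x) := fun x hx =>
    Real.one_le_rpow_of_pos_of_le_one_of_nonpos hp hp1.le (by linarith)
  set n : Fin m → ℕ := fun k => ⌈K0 * p ^ (-(a k))⌉₊ with hn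
  have hnlow : ∀ k, K0 * p ^ (-(a k)) ≤ n k := fun k => Nat.le_ceil _
  have hnlow1 : ∀ k, 1 ≤ K0 * p ^ (-(a k)) := fun k =>
    one_le_mul_of_one_le_of_one_le hK1 (hpge _ (ha0 k))
  have hnup : ∀ k, (n k : ℝ) ≤ 2 * K0 * p ^ (-(a k)) := by
    intro k
    have h1 := (Nat.ceil_lt_add_one (show 0 ≤ K0 * p ^ (-(a k)) by linarith [hnlow1 k])).le
    have h2 := hnlow1 k
    have : (n k : ℝ) ≤ K0 * p ^ (-(a k)) + 1 := h1
    linarith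
  have hnpos : ∀ k, 0 < n k := by
    intro k
    have : (0 : ℝ) < n k := by linarith [hnlow k, hnlow1 k]
    exact_mod_cast this
  have hprod : ∀ (S : Finset (Fin m)) (c : ℝ), ∏ k ∈ S, (c * p ^ (-(a k))) =
      c ^ S.card * p ^ (-(∑ k ∈ S, a k)) := by
    intro S c
    rw [Finset.prod_mul_distrib, Finset.prod_const, ← Real.rpow_sum_of_pos hp,
      Finset.sum_neg_distrib]
  -- lower bound for the expected number of copies
  have hlow : ∀ S : Finset (Fin m), S.Nonempty →
      K0 ≤ (∏ k ∈ S, (n k : ℝ)) * p ^ (S.card.choose 2) := by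
    intro S hSn
    have h1 : K0 ^ S.card * p ^ (-(∑ k ∈ S, a k)) ≤ ∏ k ∈ S, (n k : ℝ) := by
      rw [← hprod]
      exact Finset.prod_le_prod (fun k _ => by linarith [hnlow1 k]) (fun k _ => hnlow k)
    have h2 : 1 ≤ p ^ (-(∑ k ∈ S, a k)) * p ^ (S.card.choose 2) := by
      rw [← Real.rpow_natCast p, ← Real.rpow_add hp]
      exact Real.one_le_rpow_of_pos_of_le_one_of_nonpos hp hp1.le (by linarith [hS S])
    have h3 : K0 ≤ K0 ^ S.card := le_self_pow₀ hK1 hSn.card_pos.ne'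
    calc K0 ≤ K0 ^ S.card * 1 := by linarith
      _ ≤ K0 ^ S.card * (p ^ (-(∑ k ∈ S, a k)) * p ^ (S.card.choose 2)) :=
        mul_le_mul_of_nonneg_left h2 (by positivity)
      _ = K0 ^ S.card * p ^ (-(∑ k ∈ S, a k)) * p ^ (S.card.choose 2) := by ring
      _ ≤ _ := mul_le_mul_of_nonneg_right h1 (by positivity)
  have hsum : ∑ S : Finset (Fin m), ((∏ k ∈ S, (n k : ℝ)) * p ^ (S.card.choose 2))⁻¹ ≤ 1 + 1 / 4 := by
    have h1 : ∀ S : Finset (Fin m), ((∏ k ∈ S, (n k : ℝ)) * p ^ (S.card.choose 2))⁻¹ ≤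
        (if S = ∅ then 1 else 0) + K0⁻¹ := by
      intro S
      by_cases h : S = ∅
      · subst h
        simp
        positivity
      · rw [if_neg h, zero_add]
        exact inv_anti₀ (by positivity) (hlow S (Finset.nonempty_iff_ne_empty.2 h))
    refine (Finset.sum_le_sum fun S _ => h1 S).trans ?_
    rw [Finset.sum_add_distrib, Finset.sum_ite_eq' Finset.univ ∅]
    simp only [Finset.mem_univ, if_true, Finset.sum_const, Finset.card_univ, Fintype.card_finset,
      Fintype.card_fin, nsmul_eq_mul]
    rw [hK0, pow_add]
    push_cast
    have : (0 : ℝ) < 2 ^ m := by positivity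
    have h4 : (2 : ℝ) ^ m * (2 ^ m * 2 ^ 2)⁻¹ = 1 / 4 := by field_simp; norm_num
    rw [h4]
  -- cost
  have hcost : ∑ kl ∈ prs m, (∏ k ∈ Aset t kl, (n k : ℝ)) * p ^ (Hset t kl).card ≤ C0 * p ^ (-b) := by
    have : ∀ kl ∈ prs m, (∏ k ∈ Aset t kl, (n k : ℝ)) * p ^ (Hset t kl).card ≤
        (2 * K0) ^ m * p ^ (-b) := by
      intro kl hkl
      have h1 : ∏ k ∈ Aset t kl, (n k : ℝ) ≤ (2 * K0) ^ m * p ^ (-(∑ k ∈ Aset t kl, a k)) := by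
        calc _ ≤ ∏ k ∈ Aset t kl, (2 * K0 * p ^ (-(a k))) :=
              Finset.prod_le_prod (fun k _ => by positivity) (fun k _ => hnup k)
          _ = _ := hprod _ _
          _ ≤ _ := by
              refine mul_le_mul_of_nonneg_right ?_ (by positivity)
              refine pow_le_pow_right₀ (by linarith) ?_
              exact (Finset.card_le_univ _).trans (by simp)
      calc _ ≤ (2 * K0) ^ m * p ^ (-(∑ k ∈ Aset t kl, a k)) * p ^ (Hset t kl).card :=
            mul_le_mul_of_nonneg_right h1 (by positivity)
        _ = (2 * K0) ^ m * p ^ (-(∑ k ∈ Aset t kl, a k) + (Hset t kl).card) := by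
            rw [Real.rpow_add hp, Real.rpow_natCast]; ring
        _ ≤ _ := by
            refine mul_le_mul_of_nonneg_left ?_ (by positivity)
            exact Real.rpow_le_rpow_of_exponent_ge hp hp1.le (by linarith [hc kl hkl])
    refine (Finset.sum_le_sum this).trans ?_
    rw [Finset.sum_const, nsmul_eq_mul, hC0]
    linarith
  have hpb : 1 ≤ p ^ (-b) := hpge b hb
  set N : ℕ := ⌈4 * C0 * p ^ (-b) + 1⌉₊ with hN
  have hNlow : 4 * C0 * p ^ (-b) + 1 ≤ N := Nat.le_ceil _
  have hNpos : (0 : ℝ) < N := by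
    have : 0 ≤ 4 * C0 * p ^ (-b) := by positivity
    linarith
  have hNup : (N : ℝ) ≤ (4 * C0 + 2) * p ^ (-b) := by
    have h0 : 0 ≤ 4 * C0 * p ^ (-b) := by positivity
    have h1 := (Nat.ceil_lt_add_one (show 0 ≤ 4 * C0 * p ^ (-b) + 1 by linarith)).le
    have : (N : ℝ) ≤ 4 * C0 * p ^ (-b) + 1 + 1 := h1
    nlinarith
  refine le_trans ?_ hNup
  obtain ⟨L, hLnd, hL, hLs⟩ := exists_list n t
  set Y : (E → Bool) → ℝ := fun ω => ∑ kl ∈ prs m, ∑ φ ∈ box n (Aset t kl),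
    ind ω ((Hset t kl).image (ed φ)) with hY
  obtain ⟨Q, hQ, D, hLD, hle⟩ := game_bound (K m) (cnd n t) L hLnd
    (fun e he => allE_nd n e (hL ▸ List.mem_toFinset.2 he)) N p hp hp1
    (fun ω => cnt n ω ≠ 0 ∧ Y ω ≤ N) (by
      rintro ω ⟨h1, h2⟩
      refine ⟨?_, ?_⟩
      · have := qs_length n t ω L hLnd
        exact_mod_cast this.trans h2
      · obtain ⟨φ, hφ, hne⟩ := Finset.exists_ne_zero_of_sum_ne_zero h1
        have hω : ∀ kl ∈ prs m, ω (ed φ kl) = true := by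
          intro kl hkl
          by_contra hcon
          apply hne
          rw [ind, if_neg]
          intro hall
          exact hcon (hall _ (Finset.mem_image_of_mem _ hkl))
        have hcl := qs_clique n t ω L hL hLs φ hφ hω
        refine ⟨fun k => Nat.pair k (φ k), ?_, ?_⟩
        · intro k l h
          simp only [Nat.pair_eq_pair] at h
          exact Fin.ext h.1
        · intro u v huv
          have hne : u ≠ v := by simpa using huv
          rcases lt_or_gt_of_ne hne with h | h
          · exact ⟨hcl (u, v) (mem_prs.2 h), hω (u, v) (mem_prs.2 h)⟩
          · rw [Sym2.eq_swap]
            exact ⟨hcl (v, u) (mem_prs.2 h), hω (v, u) (mem_prs.2 h)⟩)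
  rw [hL] at hLD
  have hEY : Ex p D Y ≤ C0 * p ^ (-b) := by
    rw [hY, Ex_Y n hnpos t p D hLD]
    exact hcost
  set μ : ℝ := (∏ k, (n k : ℝ)) * p ^ (prs m).card with hμ
  have hμpos : 0 < μ := by
    have : 0 < ∏ k, (n k : ℝ) := Finset.prod_pos fun k _ => by exact_mod_cast hnpos k
    positivity
  have hEX : Ex p D (cnt n) = μ := Ex_cnt n p D hLD
  have hEX2 : Ex p D (fun ω => cnt n ω ^ 2) ≤ μ ^ 2 * (1 + 1 / 4) :=
    (Ex_cnt_sq n hnpos p hp hp1 D hLD).trans (mul_le_mul_of_nonneg_left hsum (by positivity))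
  have hYnn : ∀ ω, 0 ≤ Y ω := by
    intro ω
    refine Finset.sum_nonneg fun kl _ => Finset.sum_nonneg fun φ _ => ?_
    unfold ind; positivity
  have hpt : ∀ ω, (2 * μ⁻¹) * cnt n ω + ((-(μ ^ 2)⁻¹) * cnt n ω ^ 2 + (-(N : ℝ)⁻¹) * Y ω) ≤
      if cnt n ω ≠ 0 ∧ Y ω ≤ N then 1 else 0 := by
    intro ω
    have hY0 := hYnn ω
    have hNi : 0 < (N : ℝ)⁻¹ := by positivity
    have hYN : 0 ≤ (N : ℝ)⁻¹ * Y ω := by positivity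
    have hsq : (2 * μ⁻¹) * cnt n ω - (μ ^ 2)⁻¹ * cnt n ω ^ 2 ≤ 1 := by
      have h : (μ ^ 2)⁻¹ = μ⁻¹ ^ 2 := by rw [inv_pow]
      rw [h]
      nlinarith [sq_nonneg (μ⁻¹ * cnt n ω - 1)]
    split_ifs with h
    · linarith
    · by_cases h0 : cnt n ω = 0
      · rw [h0]; simp; exact hYN
      · have hYgt : (N : ℝ) < Y ω := by
          by_contra hcon
          exact h ⟨h0, not_lt.1 hcon⟩
        have : 1 ≤ (N : ℝ)⁻¹ * Y ω := by
          rw [inv_mul_eq_div, one_le_div hNpos]; exact hYgt.le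
        linarith
  have hfin := (Ex_mono hp hp1 D (fun ω => (hpt ω).trans (le_of_eq (by congr)))).trans hle
  rw [Ex_add, Ex_add, Ex_smul, Ex_smul, Ex_smul, hEX] at hfin
  have e1 : 2 * μ⁻¹ * μ = 2 := by field_simp
  have e2 : (μ ^ 2)⁻¹ * Ex p D (fun ω => cnt n ω ^ 2) ≤ 1 + 1 / 4 := by
    rw [inv_mul_le_iff₀ (by positivity)]; exact hEX2
  have e3 : (N : ℝ)⁻¹ * Ex p D Y ≤ 1 / 4 := by
    rw [inv_mul_le_iff₀ hNpos]; linarith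
  have hhalf : (1 : ℝ) / 2 ≤ queryProb (K m) Q N p := by linarith
  have : fQuery (K m) p ≤ N := Nat.sInf_le ⟨Q, hQ, hhalf⟩
  exact_mod_cast this

lemma sum_val_ge {m : ℕ} (S : Finset (Fin m)) :
    (S.card : ℝ) * (S.card - 1) / 2 ≤ ∑ k ∈ S, (k.val : ℝ) := by
  induction S using Finset.induction_on_max with
  | empty => simp
  | insert x S hx ih =>
    have hx' : x ∉ S := fun h => lt_irrefl _ (hx x h)
    rw [Finset.card_insert_of_notMem hx', Finset.sum_insert hx']
    have : S.card ≤ x.val := by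
      have h1 : S ⊆ Finset.univ.filter fun k : Fin m => k.val < x.val := by
        intro k hk
        simpa using hx k hk
      refine (Finset.card_le_card h1).trans ?_
      rw [Fin.card_filter_val_lt]
      exact min_le_right _ _
    have : (S.card : ℝ) ≤ x.val := by exact_mod_cast this
    push_cast
    nlinarith

noncomputable def aw (t : ℕ) (s c : ℝ) (k : ℕ) : ℝ :=
  if k < t then k + (if k + 1 = t then s else 0) else t + c

lemma main_param (m t : ℕ) (s c : ℝ) (ht : 1 ≤ t) (htm : t ≤ m) (hs : 0 ≤ s) (hst : s ≤ t - 1)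
    (hc : 0 ≤ c) (hsc : s + c ≤ t) (hsc1 : s ≤ 1 + c)
    (hq1 : ∀ q : ℝ, 0 ≤ q → q ≤ (m - t : ℝ) → q * (q - 1) / 2 ≤ s + q * c)
    (hq2 : ∀ q : ℝ, 0 ≤ q → q ≤ (m - t : ℝ) → q * (q - 1) / 2 ≤ q * (1 + c)) :
    ∃ C : ℝ, 0 < C ∧ ∀ p : ℝ, p ∈ Set.Ioo (0 : ℝ) 1 →
      (fQuery (K m) p : ℝ) ≤ C * p ^ (-(t + c : ℝ)) := by
  have hawge : ∀ k : ℕ, k < t → (k : ℝ) ≤ aw t s c k := by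
    intro k hk
    simp only [aw, hk, if_true]
    split_ifs <;> linarith
  have hawle : ∀ k : ℕ, aw t s c k ≤ t + c := by
    intro k
    unfold aw
    split_ifs with h1 h2
    · have : (k : ℝ) + 1 = t := by exact_mod_cast h2
      linarith
    · have : (k : ℝ) ≤ t := by exact_mod_cast h1.le
      linarith
    · exact le_rfl
  refine main_abs m t (fun k => aw t s c k) (t + c) ?_ (by positivity) ?_ ?_
  · intro k
    unfold aw
    split_ifs <;> positivity
  · intro S
    set A := S.filter fun k => k.val < t with hA
    set B := S.filter fun k => ¬ k.val < t with hB
    have hcard : A.card + B.card = S.card := Finset.card_filter_add_card_filter_not _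
    have hsum : ∑ k ∈ S, aw t s c k = ∑ k ∈ A, aw t s c k + ∑ k ∈ B, aw t s c k :=
      (Finset.sum_filter_add_sum_filter_not S _ _).symm
    have hBs : ∑ k ∈ B, aw t s c k = B.card * (t + c) := by
      rw [Finset.sum_congr rfl (g := fun _ => (t + c : ℝ)), Finset.sum_const, nsmul_eq_mul]
      intro k hk
      have := (Finset.mem_filter.1 hk).2
      simp [aw, this]
    have hAt : A.card ≤ t := by
      have h1 : A ⊆ Finset.univ.filter fun k : Fin m => k.val < t := by
        intro k hk
        simpa using (Finset.mem_filter.1 hk).2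
      refine (Finset.card_le_card h1).trans ?_
      rw [Fin.card_filter_val_lt]
      exact min_le_right _ _
    have hBt : B.card + t ≤ m := by
      have h1 : B ⊆ Finset.univ.filter fun k : Fin m => ¬ k.val < t := by
        intro k hk
        simpa using (Finset.mem_filter.1 hk).2
      have h2 := Finset.card_le_card h1
      have h3 := Finset.card_filter_add_card_filter_not (s := (Finset.univ : Finset (Fin m)))
        (fun k : Fin m => k.val < t)
      rw [Fin.card_filter_val_lt, Finset.card_univ, Fintype.card_fin] at h3
      omega
    rw [Nat.cast_choose_two, ← hcard, hsum, hBs]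
    push_cast
    have hBr : (B.card : ℝ) ≤ m - t := by
      have : (B.card : ℝ) + t ≤ m := by exact_mod_cast hBt
      linarith
    have hval := sum_val_ge A
    have hB0 : (0 : ℝ) ≤ B.card := by positivity
    rcases hAt.lt_or_eq with hlt | heq
    · have h1 : ∑ k ∈ A, (k.val : ℝ) ≤ ∑ k ∈ A, aw t s c k :=
        Finset.sum_le_sum fun k hk => hawge _ (Finset.mem_filter.1 hk).2
      have h2 := hq2 B.card hB0 hBr
      have h3 : (A.card : ℝ) + 1 ≤ t := by exact_mod_cast hlt
      nlinarith
    · have h1 : ∑ k ∈ A, (k.val : ℝ) + s ≤ ∑ k ∈ A, aw t s c k := by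
        have hfull : A = Finset.univ.filter fun k : Fin m => k.val < t := by
          refine Finset.eq_of_subset_of_card_le ?_ ?_
          · intro k hk
            simpa using (Finset.mem_filter.1 hk).2
          · rw [Fin.card_filter_val_lt, heq]
            exact min_le_right _ _
        have hmem : (⟨t - 1, by omega⟩ : Fin m) ∈ A := by
          rw [hfull]; simp; omega
        rw [← Finset.add_sum_erase _ _ hmem, ← Finset.add_sum_erase A (fun k => aw t s c k) hmem]
        have h3 : ∑ k ∈ A.erase ⟨t - 1, by omega⟩, (k.val : ℝ) ≤
            ∑ k ∈ A.erase ⟨t - 1, by omega⟩, aw t s c k :=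
          Finset.sum_le_sum fun k hk => hawge _ (Finset.mem_filter.1 (Finset.mem_of_mem_erase hk)).2
        have h4 : aw t s c (t - 1) = ((t - 1 : ℕ) : ℝ) + s := by
          have : t - 1 < t := by omega
          have h5 : t - 1 + 1 = t := by omega
          simp [aw, this, h5]
        simp only [h4]
        linarith
      have h2 := hq1 B.card hB0 hBr
      have h3 : (A.card : ℝ) = t := by exact_mod_cast heq
      rw [h3] at hval ⊢
      nlinarith
  · rintro ⟨i, j⟩ hij
    rw [mem_prs] at hij
    have hij' : i.val < j.val := hij
    rw [card_Hset]
    simp only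
    set r := min i.val t with hr
    have hAs : Aset t (i, j) = insert i (insert j (Finset.univ.filter fun k : Fin m => k.val < r)) := by
      ext k
      simp only [Aset, Finset.mem_filter, Finset.mem_univ, true_and, Finset.mem_insert]
      tauto
    have hi : i ∉ insert j (Finset.univ.filter fun k : Fin m => k.val < r) := by
      simp only [Finset.mem_insert, Finset.mem_filter, Finset.mem_univ, true_and, not_or]
      exact ⟨hij.ne, by omega⟩
    have hj : j ∉ (Finset.univ.filter fun k : Fin m => k.val < r) := by
      simp only [Finset.mem_filter, Finset.mem_univ, true_and]
      omega
    rw [hAs, Finset.sum_insert hi, Finset.sum_insert hj, Finset.sum_insert hi, Finset.sum_insert hj]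
    have e1 : min i.val r = r := by omega
    have e2 : min j.val r = r := by omega
    rw [e1, e2]
    push_cast
    have hj2 := hawle j.val
    have e3 : ∑ k ∈ Finset.univ.filter (fun k : Fin m => k.val < r), ((min (k.val : ℝ) (r : ℝ))) =
        ∑ k ∈ Finset.univ.filter (fun k : Fin m => k.val < r), (k.val : ℝ) := by
      refine Finset.sum_congr rfl fun k hk => ?_
      have : k.val < r := by simpa using hk
      exact min_eq_left (by exact_mod_cast this.le)
    rw [e3]
    by_cases hit : i.val < t
    · have hri : r = i.val := by omega
      have e4 : ∑ k ∈ Finset.univ.filter (fun k : Fin m => k.val < r), aw t s c k =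
          ∑ k ∈ Finset.univ.filter (fun k : Fin m => k.val < r), (k.val : ℝ) := by
        refine Finset.sum_congr rfl fun k hk => ?_
        have h1 : k.val < r := by simpa using hk
        have h2 : k.val < t := by omega
        have h3 : ¬ k.val + 1 = t := by omega
        simp [aw, h2, h3]
      rw [e4, hri]
      by_cases hi1 : i.val + 1 = t
      · have e5 : aw t s c i.val = i.val + s := by simp [aw, hit, hi1]
        have e6 : (i.val : ℝ) + 1 = t := by exact_mod_cast hi1
        rw [e5]
        linarith
      · have e5 : aw t s c i.val = i.val := by simp [aw, hit, hi1]
        have e6 : (0 : ℝ) ≤ i.val := by positivity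
        rw [e5]
        linarith
    · have hri : r = t := by omega
      have e5 : aw t s c i.val = t + c := by simp [aw, hit]
      have e4 : ∑ k ∈ Finset.univ.filter (fun k : Fin m => k.val < r), aw t s c k =
          ∑ k ∈ Finset.univ.filter (fun k : Fin m => k.val < r), (k.val : ℝ) + s := by
        have hmem : (⟨t - 1, by omega⟩ : Fin m) ∈ Finset.univ.filter (fun k : Fin m => k.val < r) := by
          simp; omega
        have : ∀ k ∈ Finset.univ.filter (fun k : Fin m => k.val < r), aw t s c k.val =
            (k.val : ℝ) + if k = ⟨t - 1, by omega⟩ then s else 0 := by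
          intro k hk
          have h1 : k.val < r := by simpa using hk
          have h2 : k.val < t := by omega
          have h3 : (k.val + 1 = t) ↔ k = ⟨t - 1, by omega⟩ := by
            rw [Fin.ext_iff]; simp only; omega
          simp [aw, h2, h3]
        rw [Finset.sum_congr rfl this, Finset.sum_add_distrib, Finset.sum_ite_eq', if_pos hmem]
      rw [e4, e5, hri]
      linarith

theorem stmt16 :
    (∃ C : ℝ, 0 < C ∧ ∀ p : ℝ, p ∈ Set.Ioo (0 : ℝ) 1 →
      (fQuery (K 3) p : ℝ) ≤ C * p ^ (-(3 : ℝ) / 2)) ∧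
    ∀ m : ℕ, 4 ≤ m → ∃ Cm : ℝ, 0 < Cm ∧ ∀ p : ℝ, p ∈ Set.Ioo (0 : ℝ) 1 →
      (fQuery (K m) p : ℝ) ≤ Cm * p ^ (-(2 * (m : ℝ) / 3) +
        (if m % 3 = 0 then (m : ℝ) / (2 * (m : ℝ) - 3)
          else if m % 3 = 1 then 2 / 3
          else (2 * (m : ℝ) + 8) / (6 * (m : ℝ) - 3))) := by
  constructor
  · have h := main_param 3 1 0 (1 / 2) le_rfl (by norm_num) le_rfl (by norm_num) (by norm_num)
      (by norm_num) (by norm_num) (by intro q h0 h1; norm_num at h1; nlinarith)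
      (by intro q h0 h1; norm_num at h1; nlinarith)
    have e : (-(3 : ℝ) / 2) = -(((1 : ℕ) : ℝ) + 1 / 2) := by norm_num
    rw [e]
    exact h
  · intro m hm
    have h3 : m % 3 = 0 ∨ m % 3 = 1 ∨ m % 3 = 2 := by omega
    rcases h3 with h | h | h
    · obtain ⟨k, rfl⟩ : ∃ k, m = 3 * k := ⟨m / 3, by omega⟩
      have hk : (2 : ℝ) ≤ k := by
        have : 2 ≤ k := by omega
        exact_mod_cast this
      have hpos : (0 : ℝ) < 2 * k - 1 := by linarith
      set s : ℝ := k / (2 * k - 1) with hs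
      have hs1 : s * (2 * k - 1) = k := by rw [hs]; exact div_mul_cancel₀ _ hpos.ne'
      have hs0 : 0 ≤ s := by positivity
      have hsle : s ≤ 1 := by rw [hs, div_le_one hpos]; linarith
      have hm := main_param (3 * k) k s (k - s) (by omega) (by omega) hs0 (by linarith)
        (by linarith) (by linarith) (by linarith) (by
          intro q h0 h1
          push_cast at h1
          have h2 : q ≤ 2 * k := by linarith
          have hid : s + q * (k - s) - q * (q - 1) / 2 = (2 * k - q) * (q + (2 * (k : ℝ) - 1)⁻¹) / 2 := by
            have hne := inv_mul_cancel₀ hpos.ne'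
            rw [hs, div_eq_mul_inv]
            linear_combination (-q / 2) * hne
          have : 0 ≤ (2 * k - q) * (q + (2 * (k : ℝ) - 1)⁻¹) / 2 := by
            have h4 : 0 ≤ 2 * k - q := by linarith
            have h5 : 0 ≤ (2 * (k : ℝ) - 1)⁻¹ := inv_nonneg.2 hpos.le
            positivity
          linarith) (by
          intro q h0 h1
          push_cast at h1
          nlinarith)
      have e : (-(2 * ((3 * k : ℕ) : ℝ) / 3) + (if 3 * k % 3 = 0 then ((3 * k : ℕ) : ℝ) / (2 * ((3 * k : ℕ) : ℝ) - 3)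
          else if 3 * k % 3 = 1 then 2 / 3
          else (2 * ((3 * k : ℕ) : ℝ) + 8) / (6 * ((3 * k : ℕ) : ℝ) - 3))) = -(k + (k - s)) := by
        rw [if_pos h, hs]
        push_cast
        have : (2 * (3 * (k : ℝ)) - 3) = 3 * (2 * k - 1) := by ring
        rw [this]
        field_simp
        ring
      rw [e]
      exact hm
    · obtain ⟨k, rfl⟩ : ∃ k, m = 3 * k + 1 := ⟨m / 3, by omega⟩
      have hk : (1 : ℝ) ≤ k := by
        have : 1 ≤ k := by omega
        exact_mod_cast this
      have hm := main_param (3 * k + 1) k 0 k (by omega) (by omega) le_rfl (by linarith)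
        (by linarith) (by linarith) (by linarith) (by
          intro q h0 h1
          push_cast at h1
          nlinarith) (by
          intro q h0 h1
          push_cast at h1
          nlinarith)
      have e : (-(2 * ((3 * k + 1 : ℕ) : ℝ) / 3) + (if (3 * k + 1) % 3 = 0 then
            ((3 * k + 1 : ℕ) : ℝ) / (2 * ((3 * k + 1 : ℕ) : ℝ) - 3)
          else if (3 * k + 1) % 3 = 1 then 2 / 3
          else (2 * ((3 * k + 1 : ℕ) : ℝ) + 8) / (6 * ((3 * k + 1 : ℕ) : ℝ) - 3))) = -((k : ℝ) + k) := by
        rw [if_neg (by omega), if_pos h]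
        push_cast
        ring
      rw [e]
      exact hm
    · obtain ⟨k, rfl⟩ : ∃ k, m = 3 * k + 2 := ⟨m / 3, by omega⟩
      have hk : (1 : ℝ) ≤ k := by
        have : 1 ≤ k := by omega
        exact_mod_cast this
      have hpos : (0 : ℝ) < 2 * k + 1 := by linarith
      have hle : (2 * (k : ℝ) + 1)⁻¹ ≤ 1 := inv_le_one_of_one_le₀ (by linarith)
      have hinv : 0 < (2 * (k : ℝ) + 1)⁻¹ := by positivity
      have hm := main_param (3 * k + 2) (k + 1) 1 (k - (2 * (k : ℝ) + 1)⁻¹) (by omega) (by omega)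
        zero_le_one (by push_cast; linarith)
        (by linarith) (by push_cast; linarith) (by linarith) (by
          intro q h0 h1
          push_cast at h1
          have hid : 1 + q * (k - (2 * (k : ℝ) + 1)⁻¹) - q * (q - 1) / 2 =
              (2 * k + 1 - q) * (q + 2 * (2 * (k : ℝ) + 1)⁻¹) / 2 := by
            field_simp; ring
          have : 0 ≤ (2 * k + 1 - q) * (q + 2 * (2 * (k : ℝ) + 1)⁻¹) / 2 := by
            have : 0 ≤ 2 * k + 1 - q := by linarith
            positivity
          linarith) (by
          intro q h0 h1
          push_cast at h1
          nlinarith)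
      have e : (-(2 * ((3 * k + 2 : ℕ) : ℝ) / 3) + (if (3 * k + 2) % 3 = 0 then
            ((3 * k + 2 : ℕ) : ℝ) / (2 * ((3 * k + 2 : ℕ) : ℝ) - 3)
          else if (3 * k + 2) % 3 = 1 then 2 / 3
          else (2 * ((3 * k + 2 : ℕ) : ℝ) + 8) / (6 * ((3 * k + 2 : ℕ) : ℝ) - 3))) =
          -(((k + 1 : ℕ) : ℝ) + (k - (2 * (k : ℝ) + 1)⁻¹)) := by
        rw [if_neg (by omega), if_neg (by omega)]
        push_cast
        have : (6 * (3 * (k : ℝ) + 2) - 3) = 9 * (2 * k + 1) := by ring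
        rw [this]
        field_simp
        ring
      rw [e]
      exact hm

end OnlineRamseyGame
end

section
/- For every integer m ≥ 3, every nonnegative integer c with c ≤ m/2, and every p ∈ (0,1): f(K_m, p) ≥ (1/4) · p^(−(C(m,2) − c(c−1))/(m−c)), where C(m,2) = m(m−1)/2. -/
open scoped Classical

namespace OnlineRamseyGame

def Req {m : ℕ} (S : Finset (Sym2 (Fin m))) (τ : Sym2 (Fin m) → ℕ) (e : Sym2 (Fin m)) : Prop :=
  e ∈ S ∨ ∀ v ∈ e, ∃ s ∈ S, v ∈ s ∧ τ s < τ e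

lemma pow_two_aux (i j k : ℕ) (hij : i ≠ j) (hi : i < k) (hj : j < k) : 2 ^ i + 2 ^ j ≤ 2 ^ k := by
  have h1 : 2 ^ (i + 1) ≤ 2 ^ k := Nat.pow_le_pow_right (by norm_num) hi
  have h2 : 2 ^ (j + 1) ≤ 2 ^ k := Nat.pow_le_pow_right (by norm_num) hj
  rw [pow_succ] at h1 h2
  omega

lemma exists_min_matching (m c : ℕ) (hc : 2 * c ≤ m) (τ : Sym2 (Fin m) → ℕ) :
    ∃ g : Fin c × Bool → Fin m, Function.Injective g ∧
      ∀ g' : Fin c × Bool → Fin m, Function.Injective g' →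
        ∑ i, 2 ^ τ s(g (i, false), g (i, true)) ≤ ∑ i, 2 ^ τ s(g' (i, false), g' (i, true)) := by
  have hne : ((Finset.univ : Finset (Fin c × Bool → Fin m)).filter Function.Injective).Nonempty := by
    have : Nonempty (Fin c × Bool ↪ Fin m) := by
      apply Function.Embedding.nonempty_of_card_le
      simp
      omega
    obtain ⟨g⟩ := this
    exact ⟨g, by simp [g.injective]⟩
  obtain ⟨g, hg, hmin⟩ := Finset.exists_min_image _
    (fun g : Fin c × Bool → Fin m => ∑ i, 2 ^ τ s(g (i, false), g (i, true))) hne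
  refine ⟨g, by simpa using hg, fun g' hg' => hmin g' (by simpa using hg')⟩

set_option maxHeartbeats 2000000 in
lemma comb (m c : ℕ) (hm : 3 ≤ m) (hc : 2 * c ≤ m) (τ : Sym2 (Fin m) → ℕ)
    (hτ : ∀ e e', ¬ e.IsDiag → ¬ e'.IsDiag → τ e = τ e' → e = e') :
    ∃ S : Finset (Sym2 (Fin m)), (∀ e ∈ S, ¬ e.IsDiag) ∧ S.card = m - c ∧
      (∀ v, ∃ e ∈ S, v ∈ e) ∧
      m.choose 2 ≤ (Finset.univ.filter (fun e => ¬ e.IsDiag ∧ Req S τ e)).card + c * (c - 1) := by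
  obtain ⟨g, hg, hmin⟩ := exists_min_matching m c hc τ
  set E : Fin c → Sym2 (Fin m) := fun i => s(g (i, false), g (i, true)) with hE
  have hEd : ∀ i, ¬ (E i).IsDiag := by
    intro i
    simp only [hE, Sym2.mk_isDiag_iff]
    intro h
    simpa using hg h
  have hEmem : ∀ i b, g (i, b) ∈ E i := by
    intro i b
    cases b <;> simp [hE]
  -- outside vertices
  have hP1 : ∀ u, u ∉ Set.range g → ∀ i b, τ (E i) < τ s(u, g (i, b)) := by
    intro u hu i b
    by_contra hlt
    push Not at hlt
    have hune : ∀ q, g q ≠ u := fun q h => hu ⟨q, h⟩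
    have hlt' : τ s(u, g (i, b)) < τ (E i) := by
      refine lt_of_le_of_ne hlt ?_
      intro h
      have := hτ _ _ (by simpa using (hune (i, b)).symm) (hEd i) h
      have h2 : u ∈ E i := by rw [← this]; simp
      simp only [hE, Sym2.mem_iff] at h2
      rcases h2 with h2 | h2
      · exact hune _ h2.symm
      · exact hune _ h2.symm
    have hg' : Function.Injective (Function.update g (i, !b) u) := by
      intro x y hxy
      by_cases hx : x = (i, !b) <;> by_cases hy : y = (i, !b)
      · rw [hx, hy]
      · subst hx
        rw [Function.update_self, Function.update_of_ne hy] at hxy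
        exact absurd hxy.symm (hune _)
      · subst hy
        rw [Function.update_self, Function.update_of_ne hx] at hxy
        exact absurd hxy (hune _)
      · rw [Function.update_of_ne hx, Function.update_of_ne hy] at hxy
        exact hg hxy
    have := hmin _ hg'
    refine absurd this (not_le.mpr ?_)
    apply Finset.sum_lt_sum
    · intro k _
      by_cases hk : k = i
      · subst hk
        apply Nat.pow_le_pow_right (by norm_num)
        cases b
        · simpa [Sym2.eq_swap] using hlt
        · simpa [Sym2.eq_swap] using hlt
      · simp [Function.update, hk]
    · refine ⟨i, Finset.mem_univ _, ?_⟩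
      apply Nat.pow_lt_pow_right (by norm_num)
      cases b
      · simpa [Sym2.eq_swap] using hlt'
      · simpa [Sym2.eq_swap] using hlt'
  have hP2 : ∀ i j, i ≠ j → ∀ b k, (k = i ∨ k = j) → ¬ (τ s(g (i, false), g (j, b)) < τ (E k) ∧
      τ s(g (i, true), g (j, !b)) < τ (E k)) := by
    rintro i j hij b k hk ⟨h1, h2⟩
    have hne : τ s(g (i, false), g (j, b)) ≠ τ s(g (i, true), g (j, !b)) := by
      intro h
      have := hτ _ _ (by simp [hg.eq_iff, hij]) (by simp [hg.eq_iff, hij]) h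
      simp [hg.eq_iff, hij] at this
    have hle := pow_two_aux _ _ _ hne h1 h2
    have key : ∃ g' : Fin c × Bool → Fin m, Function.Injective g' ∧
        (∀ k, k ≠ i → k ≠ j → s(g' (k, false), g' (k, true)) = E k) ∧
        s(g' (i, false), g' (i, true)) = s(g (i, false), g (j, b)) ∧
        s(g' (j, false), g' (j, true)) = s(g (i, true), g (j, !b)) := by
      refine ⟨g ∘ Equiv.swap (i, true) (j, b), hg.comp (Equiv.injective _), ?_, ?_, ?_⟩
      · intro k hki hkj
        simp [Equiv.swap_apply_def, hki, hkj, hE]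
      · simp [Equiv.swap_apply_def, hij]
      · cases b
        · simp [Equiv.swap_apply_def, hij.symm]
        · simp [Equiv.swap_apply_def, hij.symm, Sym2.eq_swap]
    obtain ⟨g', hg', ho, hi', hj'⟩ := key
    have := hmin _ hg'
    refine absurd this (not_le.mpr ?_)
    have hsplit : ∀ F : Fin c → ℕ, ∑ k, F k = F i + F j + ∑ k ∈ (Finset.univ.erase i).erase j, F k := by
      intro F
      rw [← Finset.add_sum_erase _ F (Finset.mem_univ i),
        ← Finset.add_sum_erase (Finset.univ.erase i) F (a := j) (by simp [hij.symm]), add_assoc]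
    rw [hsplit, hsplit (fun k => 2 ^ τ s(g (k, false), g (k, true)))]
    rw [hi', hj']
    have hrest : ∑ k ∈ (Finset.univ.erase i).erase j, 2 ^ τ s(g' (k, false), g' (k, true))
        = ∑ k ∈ (Finset.univ.erase i).erase j, 2 ^ τ s(g (k, false), g (k, true)) := by
      apply Finset.sum_congr rfl
      intro k hk
      simp only [Finset.mem_erase] at hk
      rw [ho k hk.2.1 hk.1]
    rw [hrest]
    have hpi : 0 < 2 ^ τ (E i) := by positivity
    have hpj : 0 < 2 ^ τ (E j) := by positivity
    have : 2 ^ τ s(g (i, false), g (j, b)) + 2 ^ τ s(g (i, true), g (j, !b)) < 2 ^ τ (E i) + 2 ^ τ (E j) := by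
      rcases hk with rfl | rfl <;> omega
    exact Nat.add_lt_add_right this _
  have hfirst : ∀ u : Fin m, ∃ e : Sym2 (Fin m), ¬ e.IsDiag ∧ u ∈ e ∧
      ∀ e' : Sym2 (Fin m), ¬ e'.IsDiag → u ∈ e' → τ e ≤ τ e' := by
    intro u
    have hne : ((Finset.univ : Finset (Sym2 (Fin m))).filter (fun e => ¬ e.IsDiag ∧ u ∈ e)).Nonempty := by
      have : Nontrivial (Fin m) := Fin.nontrivial_iff_two_le.mpr (by omega)
      obtain ⟨v, hv⟩ := exists_ne u
      exact ⟨s(u, v), by simp [hv.symm]⟩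
    obtain ⟨e, he, hmin⟩ := Finset.exists_min_image _ τ hne
    simp only [Finset.mem_filter, Finset.mem_univ, true_and, and_imp] at he hmin
    exact ⟨e, he.1, he.2, hmin⟩
  choose fst hf1 hf2 hf3 using hfirst
  set U : Finset (Fin m) := Finset.univ \ Finset.univ.image g with hU
  have hUcard : U.card = m - 2 * c := by
    rw [hU, Finset.card_sdiff_of_subset (Finset.subset_univ _), Finset.card_image_of_injective _ hg]
    simp [mul_comm]
  set S0 : Finset (Sym2 (Fin m)) := Finset.univ.image E ∪ U.image fst with hS0
  have hS0card : S0.card ≤ m - c := by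
    have h1 : (Finset.univ.image E).card ≤ c := by
      simpa using (Finset.card_image_le (s := Finset.univ) (f := E))
    have h2 : (U.image fst).card ≤ U.card := Finset.card_image_le
    calc S0.card ≤ (Finset.univ.image E).card + (U.image fst).card := Finset.card_union_le _ _
      _ ≤ c + (m - 2 * c) := Nat.add_le_add h1 (h2.trans hUcard.le)
      _ = m - c := by omega
  set D : Finset (Sym2 (Fin m)) := Finset.univ.filter (fun e => ¬ e.IsDiag) with hD
  have hDcard : D.card = m.choose 2 := by
    have := Sym2.card_subtype_not_diag (α := Fin m)
    rw [Fintype.card_subtype] at this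
    simpa using this
  have hS0D : S0 ⊆ D := by
    intro e he
    simp only [hS0, Finset.mem_union, Finset.mem_image] at he
    simp only [hD, Finset.mem_filter, Finset.mem_univ, true_and]
    rcases he with ⟨i, _, rfl⟩ | ⟨u, _, rfl⟩
    · exact hEd i
    · exact hf1 u
  have hmD : m - c ≤ D.card := by
    rw [hDcard, Nat.choose_two_right]
    have : m * 2 ≤ m * (m - 1) := Nat.mul_le_mul_left _ (by omega)
    omega
  obtain ⟨S, hS0S, hSD, hScard⟩ := Finset.exists_subsuperset_card_eq hS0D hS0card hmD
  have hES : ∀ i, E i ∈ S := fun i => hS0S (by simp [hS0])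
  have hFS : ∀ u, u ∉ Set.range g → fst u ∈ S := by
    intro u hu
    apply hS0S
    simp only [hS0, Finset.mem_union, Finset.mem_image]
    right
    refine ⟨u, ?_, rfl⟩
    simp only [hU, Finset.mem_sdiff, Finset.mem_univ, true_and, Finset.mem_image]
    exact hu
  refine ⟨S, fun e he => by simpa [hD] using hSD he, hScard, ?_, ?_⟩
  · intro v
    by_cases hv : v ∈ Set.range g
    · obtain ⟨⟨i, b⟩, rfl⟩ := hv
      exact ⟨E i, hES i, hEmem i b⟩
    · exact ⟨fst v, hFS v hv, hf2 v⟩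
  -- the outside edges are required
  have hout : ∀ u w, u ≠ w → u ∉ Set.range g → Req S τ s(u, w) := by
    intro u w huw hu
    by_cases hin : s(u, w) ∈ S
    · exact Or.inl hin
    have hlt : ∀ z, z ∈ s(u, w) → z ∉ Set.range g → ∃ s ∈ S, z ∈ s ∧ τ s < τ s(u, w) := by
      intro z hz hzr
      refine ⟨fst z, hFS z hzr, hf2 z, lt_of_le_of_ne (hf3 z _ (by simpa using huw) hz) ?_⟩
      intro h
      exact hin (hτ _ _ (hf1 z) (by simpa using huw) h ▸ hFS z hzr)
    refine Or.inr ?_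
    intro v hv
    by_cases hvr : v ∈ Set.range g
    · obtain ⟨⟨i, b⟩, rfl⟩ := hvr
      have : g (i, b) = w := by
        rcases Sym2.mem_iff.mp hv with h | h
        · exact absurd ⟨_, h⟩ hu
        · exact h
      subst this
      exact ⟨E i, hES i, hEmem i b, hP1 u hu i b⟩
    · exact hlt v hv hvr
  -- cross edges
  have hcross : ∀ i j a b, i ≠ j → ¬ Req S τ s(g (i, a), g (j, b)) →
      τ s(g (i, a), g (j, b)) < τ (E i) ∨ τ s(g (i, a), g (j, b)) < τ (E j) := by
    intro i j a b hij hn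
    by_contra hcon
    push Not at hcon
    have hin : s(g (i, a), g (j, b)) ∉ S := fun h => hn (Or.inl h)
    have hnd : ¬ (s(g (i, a), g (j, b))).IsDiag := by simp [hg.eq_iff, hij]
    have hl : ∀ k, τ (E k) ≤ τ s(g (i, a), g (j, b)) → τ (E k) < τ s(g (i, a), g (j, b)) := by
      intro k hk
      refine lt_of_le_of_ne hk fun h => hin (hτ _ _ (hEd k) hnd h ▸ hES k)
    apply hn
    right
    intro v hv
    rcases Sym2.mem_iff.mp hv with rfl | rfl
    · exact ⟨E i, hES i, hEmem i a, hl i hcon.1⟩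
    · exact ⟨E j, hES j, hEmem j b, hl j hcon.2⟩
  have hnot2 : ∀ i j, i ≠ j → ∀ b, ¬ Req S τ s(g (i, false), g (j, b)) →
      ¬ Req S τ s(g (i, true), g (j, !b)) → False := by
    intro i j hij b h1 h2
    have h1 := hcross _ _ _ _ hij h1
    have h2 := hcross _ _ _ _ hij h2
    rcases le_total (τ (E i)) (τ (E j)) with h | h
    · exact hP2 i j hij b j (Or.inr rfl) ⟨by omega, by omega⟩
    · exact hP2 i j hij b i (Or.inl rfl) ⟨by omega, by omega⟩
  set φ : Fin c × Fin c → Sym2 (Fin m) := fun q =>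
    if q.1 < q.2 then
      (if Req S τ s(g (q.1, false), g (q.2, false)) then s(g (q.1, true), g (q.2, true))
        else s(g (q.1, false), g (q.2, false)))
    else
      (if Req S τ s(g (q.1, false), g (q.2, true)) then s(g (q.1, true), g (q.2, false))
        else s(g (q.1, false), g (q.2, true))) with hφ
  have hNR : D.filter (fun e => ¬ Req S τ e) ⊆ (Finset.univ.offDiag).image φ := by
    intro e he
    simp only [hD, Finset.mem_filter, Finset.mem_univ, true_and] at he
    obtain ⟨hd, hn⟩ := he
    induction e using Sym2.ind with
    | _ u w =>
    have huw : u ≠ w := by simpa using hd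
    have hu : u ∈ Set.range g := by
      by_contra h
      exact hn (hout u w huw h)
    have hw : w ∈ Set.range g := by
      by_contra h
      rw [Sym2.eq_swap] at hn
      exact hn (hout w u huw.symm h)
    obtain ⟨⟨i, a⟩, rfl⟩ := hu
    obtain ⟨⟨j, b⟩, rfl⟩ := hw
    have hij : i ≠ j := by
      rintro rfl
      apply hn
      left
      have : a ≠ b := by rintro rfl; exact huw rfl
      have : s(g (i, a), g (i, b)) = E i := by
        cases a <;> cases b
        · exact absurd rfl this
        · rfl
        · exact Sym2.eq_swap
        · exact absurd rfl this
      rw [this]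
      exact hES i
    have main : ∀ i j a b, i < j → ¬ Req S τ s(g (i, a), g (j, b)) →
        s(g (i, a), g (j, b)) ∈ (Finset.univ.offDiag).image φ := by
      clear hd hn huw hij
      intro i j a b hij hn
      have hne : i ≠ j := ne_of_lt hij
      rw [Finset.mem_image]
      by_cases hab : a = b
      · subst hab
        refine ⟨(i, j), by simp [hne], ?_⟩
        simp only [hφ, hij, if_true]
        cases a
        · simp [hn]
        · rw [if_pos]
          by_contra h
          exact hnot2 i j hne false h hn
      · refine ⟨(j, i), by simp [hne.symm], ?_⟩
        simp only [hφ, not_lt.mpr hij.le, if_false]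
        cases a <;> cases b
        · exact absurd rfl hab
        · rw [if_pos, Sym2.eq_swap]
          by_contra h
          rw [Sym2.eq_swap] at hn
          exact hnot2 j i hne.symm true h (by rw [Sym2.eq_swap] at hn ⊢; exact hn)
        · rw [Sym2.eq_swap] at hn
          rw [if_neg hn, Sym2.eq_swap]
        · exact absurd rfl hab
    rcases lt_or_gt_of_ne hij with h | h
    · exact main i j a b h hn
    · rw [Sym2.eq_swap] at hn ⊢
      exact main j i b a h hn
  have hNRcard : (D.filter (fun e => ¬ Req S τ e)).card ≤ c * (c - 1) := by
    refine (Finset.card_le_card hNR).trans (Finset.card_image_le.trans ?_)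
    rw [Finset.offDiag_card]
    simp [Nat.mul_sub]
  have hsum := Finset.card_filter_add_card_filter_not (s := D) (fun e => Req S τ e)
  rw [hD, Finset.filter_filter, ← hD] at hsum
  omega

def Ev (R : List Bool → Prop) (y : ℕ → Bool) (N E : ℕ) : Prop :=
  (∀ t < N, R (histSeq y t) → y t = true) ∧
    E ≤ ((Finset.range N).filter (fun t => R (histSeq y t))).card

lemma extSeq_cons_zero {N : ℕ} (b : Bool) (x : Fin N → Bool) :
    extSeq (Fin.cons b x : Fin (N + 1) → Bool) 0 = b := by
  simp [extSeq]

lemma extSeq_cons_succ {N : ℕ} (b : Bool) (x : Fin N → Bool) (t : ℕ) :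
    extSeq (Fin.cons b x : Fin (N + 1) → Bool) (t + 1) = extSeq x t := by
  unfold extSeq
  by_cases h : t < N
  · have h' : t + 1 < N + 1 := by omega
    rw [dif_pos h, dif_pos h']
    exact Fin.cons_succ (α := fun _ => Bool) b x ⟨t, h⟩
  · have h' : ¬ t + 1 < N + 1 := by omega
    rw [dif_neg h, dif_neg h']

lemma hist_cons_succ {N : ℕ} (b : Bool) (x : Fin N → Bool) (t : ℕ) :
    histSeq (extSeq (Fin.cons b x : Fin (N + 1) → Bool)) (t + 1) = b :: histSeq (extSeq x) t := by
  unfold histSeq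
  rw [List.range_succ_eq_map, List.map_cons, List.map_map, extSeq_cons_zero]
  congr 1
  apply List.map_congr_left
  intro a _
  exact extSeq_cons_succ b x a

lemma hist_zero (y : ℕ → Bool) : histSeq y 0 = [] := rfl

lemma Ev_cons {N : ℕ} (R : List Bool → Prop) (b : Bool) (x : Fin N → Bool) (E : ℕ)
    (h : Ev R (extSeq (Fin.cons b x : Fin (N + 1) → Bool)) (N + 1) E) :
    (R [] → b = true) ∧ Ev (fun l => R (b :: l)) (extSeq x) N (E - if R [] then 1 else 0) := by
  obtain ⟨h1, h2⟩ := h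
  refine ⟨?_, ?_, ?_⟩
  · intro hR
    have := h1 0 (by omega) (by rwa [hist_zero])
    rwa [extSeq_cons_zero] at this
  · intro t ht hR
    have := h1 (t + 1) (by omega) (by rwa [hist_cons_succ])
    rwa [extSeq_cons_succ] at this
  · have key : ((Finset.range (N + 1)).filter
        (fun t => R (histSeq (extSeq (Fin.cons b x : Fin (N + 1) → Bool)) t))).card
        = ((Finset.range N).filter (fun t => (fun l => R (b :: l)) (histSeq (extSeq x) t))).card
          + if R [] then 1 else 0 := by
      rw [Finset.card_filter, Finset.sum_range_succ', Finset.card_filter]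
      congr 1
      apply Finset.sum_congr rfl
      intro t _
      simp only [hist_cons_succ]
    rw [key] at h2
    omega

lemma weight_nonneg {p : ℝ} (h0 : 0 ≤ p) (h1 : p ≤ 1) {N : ℕ} (x : Fin N → Bool) :
    0 ≤ weight p x := by
  unfold weight
  apply Finset.prod_nonneg
  intro i _
  split_ifs <;> linarith

lemma prob_bound {p : ℝ} (h0 : 0 ≤ p) (h1 : p ≤ 1) (N : ℕ) : ∀ (R : List Bool → Prop) (E : ℕ),
    ∑ x : Fin N → Bool, weight p x * (if Ev R (extSeq x) N E then (1 : ℝ) else 0) ≤ p ^ E := by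
  induction N with
  | zero =>
    intro R E
    rcases Nat.eq_zero_or_pos E with rfl | hE
    · simp only [weight, Finset.univ_unique, Finset.sum_singleton, Finset.univ_eq_empty,
        Finset.prod_empty, pow_zero, one_mul]
      split_ifs <;> norm_num
    · have : ∀ x : Fin 0 → Bool, ¬ Ev R (extSeq x) 0 E := by
        intro x h
        have := h.2
        simp at this
        omega
      simp only [this, if_false, mul_zero, Finset.sum_const_zero]
      positivity
  | succ N ih =>
    intro R E
    rw [← (Fin.consEquiv (fun _ : Fin (N + 1) => Bool)).sum_comp, Fintype.sum_prod_type,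
      Fintype.sum_bool]
    have hw : ∀ (b : Bool) (x : Fin N → Bool),
        weight p (Fin.cons b x : Fin (N + 1) → Bool) = (if b then p else 1 - p) * weight p x := by
      intro b x
      simp [weight, Fin.prod_univ_succ]
    have hstep : ∀ b : Bool, (R [] → b = true) →
        ∑ x : Fin N → Bool, weight p (Fin.cons b x : Fin (N + 1) → Bool) *
          (if Ev R (extSeq (Fin.cons b x : Fin (N + 1) → Bool)) (N + 1) E then (1 : ℝ) else 0)
          ≤ (if b then p else 1 - p) * p ^ (E - if R [] then 1 else 0) := by
      intro b _
      have hb : (0 : ℝ) ≤ (if b then p else 1 - p) := by split_ifs <;> linarith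
      refine le_trans ?_ (mul_le_mul_of_nonneg_left
        (ih (fun l => R (b :: l)) (E - if R [] then 1 else 0)) hb)
      rw [Finset.mul_sum]
      apply Finset.sum_le_sum
      intro x _
      rw [hw, mul_assoc]
      apply mul_le_mul_of_nonneg_left _ hb
      apply mul_le_mul_of_nonneg_left _ (weight_nonneg h0 h1 x)
      by_cases h : Ev R (extSeq (Fin.cons b x : Fin (N + 1) → Bool)) (N + 1) E
      · rw [if_pos h, if_pos (Ev_cons R b x E h).2]
      · rw [if_neg h]
        split_ifs <;> norm_num
    have hce : ∀ (b : Bool) (x : Fin N → Bool),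
        (Fin.consEquiv (fun _ : Fin (N + 1) => Bool)) (b, x) = Fin.cons b x := fun _ _ => rfl
    simp only [hce]
    by_cases hR : R []
    · have h2 := hstep true (fun _ => rfl)
      have h3 : ∑ x : Fin N → Bool, weight p (Fin.cons false x : Fin (N + 1) → Bool) *
          (if Ev R (extSeq (Fin.cons false x : Fin (N + 1) → Bool)) (N + 1) E then (1 : ℝ) else 0)
          = 0 := by
        apply Finset.sum_eq_zero
        intro x _
        rw [if_neg, mul_zero]
        intro h
        simpa using (Ev_cons R false x E h).1 hR
      rw [h3, add_zero]
      refine h2.trans ?_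
      simp only [if_true, hR]
      rw [← pow_succ']
      exact pow_le_pow_of_le_one h0 h1 (by omega)
    · have h2 := hstep true (fun h => absurd h hR)
      have h3 := hstep false (fun h => absurd h hR)
      simp only [hR, if_false, if_true, Nat.sub_zero, Bool.false_eq_true] at h2 h3
      linarith

def RT (Q : List Bool → Sym2 ℕ) (T : Finset ℕ) (h : List Bool) : Prop :=
  h.length ∈ T ∨ ∀ v ∈ Q h, ∃ s ∈ T, s < h.length ∧ v ∈ Q (h.take s)

lemma hist_length (y : ℕ → Bool) (t : ℕ) : (histSeq y t).length = t := by simp [histSeq]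

lemma hist_take (y : ℕ → Bool) (t s : ℕ) (h : s ≤ t) : (histSeq y t).take s = histSeq y s := by
  simp [histSeq, ← List.map_take, List.take_range, min_eq_left h]

lemma comb' (m c : ℕ) (hm : 3 ≤ m) (hc : 2 * c ≤ m) (τ : Sym2 (Fin m) → ℕ)
    (hτ : ∀ e e', ¬ e.IsDiag → ¬ e'.IsDiag → τ e = τ e' → e = e') :
    ∃ S : Finset (Sym2 (Fin m)), (∀ e ∈ S, ¬ e.IsDiag) ∧ S.card = m - c ∧
      m.choose 2 ≤ (Finset.univ.filter (fun e : Sym2 (Fin m) => ¬ e.IsDiag ∧ (e ∈ S ∨ ∀ v ∈ e, ∃ s ∈ S, v ∈ s ∧ τ s < τ e))).card + c * (c - 1) := by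
  obtain ⟨S, h1, h2, _, h3⟩ := comb m c hm hc τ hτ
  refine ⟨S, h1, h2, h3.trans (le_of_eq ?_)⟩
  unfold Req
  congr!

lemma copy_event (m c : ℕ) (hm : 3 ≤ m) (hc : 2 * c ≤ m) (Q : List Bool → Sym2 ℕ)
    (hQ : ValidBuilder Q) (N : ℕ) (y : ℕ → Bool)
    (hcopy : ContainsCopy (K m) (fun t => Q (histSeq y t)) y N) :
    ∃ T ∈ (Finset.range N).powersetCard (m - c),
      Ev (RT Q T) y N (m.choose 2 - c * (c - 1)) := by
  obtain ⟨f, hf, hcl⟩ := hcopy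
  have huniq : ∀ s t, Q (histSeq y s) = Q (histSeq y t) → s = t := by
    have aux : ∀ s t, s < t → Q (histSeq y s) ≠ Q (histSeq y t) := by
      intro s t hst
      have := hQ.2 (histSeq y t) s (by rwa [hist_length])
      rwa [hist_take _ _ _ hst.le] at this
    intro s t h
    rcases lt_trichotomy s t with h' | h' | h'
    · exact absurd h (aux _ _ h')
    · exact h'
    · exact absurd h.symm (aux _ _ h')
  have hex : ∀ e : Sym2 (Fin m), ∃ t, ¬ e.IsDiag →
      (t < N ∧ Q (histSeq y t) = e.map f ∧ y t = true) := by
    intro e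
    induction e using Sym2.ind with
    | _ u v =>
    by_cases huv : u = v
    · exact ⟨0, fun h => absurd (by simpa using huv) h⟩
    · obtain ⟨t, h1, h2, h3⟩ := hcl u v (by simpa using huv)
      exact ⟨t, fun _ => ⟨h1, by simpa using h2, h3⟩⟩
  choose τ hτ using hex
  have hinj : ∀ e e', ¬ e.IsDiag → ¬ e'.IsDiag → τ e = τ e' → e = e' := by
    intro e e' he he' h
    have h1 := (hτ e he).2.1
    have h2 := (hτ e' he').2.1
    rw [h, h2] at h1
    exact (Sym2.map.injective hf h1).symm
  obtain ⟨S, hSd, hScard, hS⟩ := comb' m c hm hc τ hinj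
  have hTmem : ∀ s ∈ S.image τ, ∃ e ∈ S, ¬ e.IsDiag ∧ τ e = s := by
    intro s hs
    obtain ⟨e, he, rfl⟩ := Finset.mem_image.mp hs
    exact ⟨e, he, hSd e he, rfl⟩
  refine ⟨S.image τ, ?_, ?_, ?_⟩
  · rw [Finset.mem_powersetCard]
    constructor
    · intro s hs
      obtain ⟨e, he, hd, rfl⟩ := hTmem s hs
      exact Finset.mem_range.mpr (hτ e hd).1
    · rw [Finset.card_image_of_injOn, hScard]
      intro e he e' he' h
      exact hinj e e' (hSd e he) (hSd e' he') h
  · intro t ht hR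
    unfold RT at hR
    rw [hist_length] at hR
    rcases hR with hR | hR
    · obtain ⟨e, he, hd, rfl⟩ := hTmem t hR
      exact (hτ e hd).2.2
    · have hr : ∀ v ∈ Q (histSeq y t), ∃ u, f u = v := by
        intro v hv
        obtain ⟨s, hs, hst, hvs⟩ := hR v hv
        rw [hist_take _ _ _ hst.le] at hvs
        obtain ⟨e, he, hd, rfl⟩ := hTmem s hs
        rw [(hτ e hd).2.1, Sym2.mem_map] at hvs
        obtain ⟨u, _, hu⟩ := hvs
        exact ⟨u, hu⟩
      have hdiag := hQ.1 (histSeq y t)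
      obtain ⟨e, he⟩ : ∃ e : Sym2 (Fin m), e.map f = Q (histSeq y t) := by
        generalize Q (histSeq y t) = q at hr
        induction q using Sym2.ind with
        | _ a b =>
        obtain ⟨u, rfl⟩ := hr a (by simp)
        obtain ⟨v, rfl⟩ := hr b (by simp)
        exact ⟨s(u, v), by simp⟩
      have hd : ¬ e.IsDiag := by
        intro h
        apply hdiag
        rw [← he]
        induction e using Sym2.ind with
        | _ a b =>
        simp only [Sym2.mk_isDiag_iff] at h
        simp [h]
      have := huniq (τ e) t (by rw [(hτ e hd).2.1, he])
      rw [← this]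
      exact (hτ e hd).2.2
  · refine (Nat.sub_le_iff_le_add.mpr hS).trans ?_
    apply Finset.card_le_card_of_injOn τ
    · intro e he
      simp only [Finset.coe_filter, Finset.mem_univ, true_and, Set.mem_ofPred_eq] at he
      simp only [Finset.coe_filter, Finset.mem_range, Set.mem_ofPred_eq]
      obtain ⟨hd, he⟩ := he
      refine ⟨(hτ e hd).1, ?_⟩
      unfold RT
      rw [hist_length]
      rcases he with he | he
      · exact Or.inl (Finset.mem_image_of_mem _ he)
      · right
        intro v hv
        rw [(hτ e hd).2.1, Sym2.mem_map] at hv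
        obtain ⟨u, hu, rfl⟩ := hv
        obtain ⟨s, hs, hus, hlt⟩ := he u hu
        refine ⟨τ s, Finset.mem_image_of_mem _ hs, hlt, ?_⟩
        rw [hist_take _ _ _ hlt.le, (hτ s (hSd s hs)).2.1, Sym2.mem_map]
        exact ⟨u, hus, rfl⟩
    · intro e he e' he' h
      simp only [Finset.coe_filter, Finset.mem_univ, true_and, Set.mem_ofPred_eq] at he he'
      exact hinj e e' he.1 he'.1 h

lemma queryProb_le (m c : ℕ) (hm : 3 ≤ m) (hc : 2 * c ≤ m) (Q : List Bool → Sym2 ℕ)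
    (hQ : ValidBuilder Q) (N : ℕ) {p : ℝ} (h0 : 0 ≤ p) (h1 : p ≤ 1) :
    queryProb (K m) Q N p ≤ (N : ℝ) ^ (m - c) * p ^ (m.choose 2 - c * (c - 1)) := by
  have hstep : queryProb (K m) Q N p ≤ ∑ T ∈ (Finset.range N).powersetCard (m - c),
      ∑ x : Fin N → Bool, weight p x *
        (if Ev (RT Q T) (extSeq x) N (m.choose 2 - c * (c - 1)) then (1 : ℝ) else 0) := by
    rw [Finset.sum_comm]
    unfold queryProb
    apply Finset.sum_le_sum
    intro x _
    rw [← Finset.mul_sum]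
    apply mul_le_mul_of_nonneg_left _ (weight_nonneg h0 h1 x)
    have hnn : ∀ T ∈ (Finset.range N).powersetCard (m - c),
        (0 : ℝ) ≤ (if Ev (RT Q T) (extSeq x) N (m.choose 2 - c * (c - 1)) then (1 : ℝ) else 0) := by
      intro T _
      split_ifs <;> norm_num
    split_ifs with h
    · obtain ⟨T, hT, hE⟩ := copy_event m c hm hc Q hQ N _ h
      refine le_trans ?_ (Finset.single_le_sum hnn hT)
      rw [if_pos hE]
    · exact Finset.sum_nonneg hnn
  refine hstep.trans ((Finset.sum_le_sum fun T _ => prob_bound h0 h1 N (RT Q T) _).trans ?_)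
  rw [Finset.sum_const, Finset.card_powersetCard, Finset.card_range, nsmul_eq_mul]
  apply mul_le_mul_of_nonneg_right _ (by positivity)
  exact_mod_cast Nat.choose_le_pow N (m - c)

lemma exists_strategy (m : ℕ) (hm : 3 ≤ m) {p : ℝ} (h0 : 0 < p) (h1 : p < 1) :
    ∃ N : ℕ, ∃ Q : List Bool → Sym2 ℕ, ValidBuilder Q ∧ (1 : ℝ) / 2 ≤ queryProb (K m) Q N p := by
  let D := {e : Sym2 (Fin m) // ¬ e.IsDiag}
  obtain ⟨M, ⟨ε⟩⟩ : ∃ M : ℕ, Nonempty (Fin M ≃ D) := ⟨Fintype.card D, ⟨(Fintype.equivFin D).symm⟩⟩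
  have hM : 0 < M := by
    have : Nonempty D := ⟨⟨s(⟨0, by omega⟩, ⟨1, by omega⟩), by simp⟩⟩
    exact Fin.pos_iff_nonempty.mpr ⟨ε.symm this.some⟩
  let ι : ℕ → Fin m → ℕ := fun q i => q * m + i
  have hι : ∀ q q' i i', ι q i = ι q' i' → q = q' ∧ i = i' := by
    intro q q' i i' h
    have hq : ∀ q (i : Fin m), ι q i / m = q := by
      intro q i
      simp only [ι]
      rw [mul_comm, Nat.mul_add_div (by omega), Nat.div_eq_of_lt i.2, add_zero]
    have e1 : q = q' := by rw [← hq q i, h, hq]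
    subst e1
    refine ⟨rfl, ?_⟩
    simp only [ι] at h
    exact Fin.ext (by omega)
  let ed : ℕ → Sym2 ℕ := fun t => ((ε ⟨t % M, Nat.mod_lt _ hM⟩).1).map (ι (t / M))
  have hinj : Function.Injective ed := by
    intro t t' h
    have hq : t / M = t' / M := by
      simp only [ed] at h
      have hv : ∀ e e' : Sym2 (Fin m), ∀ q q', e.map (ι q) = e'.map (ι q') → q = q' := by
        intro e e' q q' h
        induction e using Sym2.ind with
        | _ a b =>
        have : ι q a ∈ e'.map (ι q') := by rw [← h]; simp
        obtain ⟨u, _, hu⟩ := Sym2.mem_map.mp this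
        exact (hι _ _ _ _ hu).1.symm
      exact hv _ _ _ _ h
    simp only [ed, hq] at h
    have h2 := Sym2.map.injective (f := ι (t' / M)) (fun i i' h => (hι _ _ _ _ h).2) h
    have h3 := ε.injective (Subtype.ext h2)
    have h4 : t % M = t' % M := by simpa using h3
    rw [← Nat.div_add_mod t M, ← Nat.div_add_mod t' M, hq, h4]
  have hpM : 0 < p ^ M := by positivity
  have hpM1 : p ^ M ≤ 1 := pow_le_one₀ h0.le h1.le
  obtain ⟨q, hq⟩ : ∃ q : ℕ, (1 - p ^ M) ^ q < 1 / 2 :=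
    exists_pow_lt_of_lt_one (by norm_num) (by linarith)
  refine ⟨q * M, fun h => ed h.length, ⟨?_, ?_⟩, ?_⟩
  · intro h hd
    have : ∀ e : Sym2 (Fin m), ∀ q, (e.map (ι q)).IsDiag → e.IsDiag := by
      intro e q
      induction e using Sym2.ind with
      | _ a b =>
      simp only [Sym2.map_mk, Sym2.mk_isDiag_iff]
      intro h
      exact (hι _ _ _ _ h).2
    exact (ε _).2 (this _ _ hd)
  · intro h i hi heq
    have := hinj heq
    rw [List.length_take] at this
    omega
  · have hsucc : ∀ x : Fin (q * M) → Bool, (∃ a : Fin q, ∀ b : Fin M, x (finProdFinEquiv (a, b)) = true) →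
        ContainsCopy (K m) (fun t => ed (histSeq (extSeq x) t).length) (extSeq x) (q * M) := by
      rintro x ⟨a, ha⟩
      refine ⟨ι a, fun i i' h => (hι _ _ _ _ h).2, ?_⟩
      intro u v huv
      have hne : u ≠ v := huv
      let b : Fin M := ε.symm ⟨s(u, v), by simpa using hne⟩
      have hb := ha b
      refine ⟨(finProdFinEquiv (a, b) : Fin (q * M)), Fin.is_lt _, ?_, ?_⟩
      · simp only [hist_length, ed]
        have e1 : ((finProdFinEquiv (a, b) : Fin (q * M)) : ℕ) / M = a := by
          simp [finProdFinEquiv, Nat.add_mul_div_left _ _ hM]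
        have e2 : ((finProdFinEquiv (a, b) : Fin (q * M)) : ℕ) % M = b := by
          simp [finProdFinEquiv, Nat.mod_eq_of_lt b.2]
        have e3 : (⟨((finProdFinEquiv (a, b) : Fin (q * M)) : ℕ) % M, Nat.mod_lt _ hM⟩ : Fin M) = b :=
          Fin.ext e2
        rw [e3, e1]
        simp [b]
      · unfold extSeq
        rw [dif_pos (Fin.is_lt _)]
        exact hb
    let W : Bool → ℝ := fun b => if b then p else 1 - p
    let Z : (Fin M → Bool) → ℝ := fun z => if ∀ b, z b = true then 1 else 0
    have hw : ∀ x : Fin (q * M) → Bool, weight p x = ∏ a : Fin q, ∏ b : Fin M, W (x (finProdFinEquiv (a, b))) := by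
      intro x
      unfold weight
      rw [← finProdFinEquiv.prod_comp, Fintype.prod_prod_type]
    have htot : ∀ n : ℕ, ∑ z : Fin n → Bool, ∏ b, W (z b) = 1 := by
      intro n
      have := Finset.prod_univ_sum (fun _ : Fin n => (Finset.univ : Finset Bool)) (fun _ b => W b)
      rw [Fintype.piFinset_univ] at this
      rw [← this]
      simp [W]
    have hblock : ∑ z : Fin M → Bool, (∏ b, W (z b)) * (1 - Z z) = 1 - p ^ M := by
      simp only [mul_sub, mul_one, Finset.sum_sub_distrib, htot]
      congr 1
      rw [Finset.sum_eq_single (fun _ => true)]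
      · simp [W, Z]
      · intro z _ hz
        have : ¬ ∀ b, z b = true := fun h => hz (funext h)
        simp [Z, this]
      · simp
    have hfail : ∑ x : Fin (q * M) → Bool, weight p x * ∏ a : Fin q, (1 - Z (fun b => x (finProdFinEquiv (a, b))))
        = (1 - p ^ M) ^ q := by
      let Φ : (Fin q → Fin M → Bool) ≃ (Fin (q * M) → Bool) :=
        (Equiv.curry (Fin q) (Fin M) Bool).symm.trans (Equiv.arrowCongr finProdFinEquiv (Equiv.refl _))
      have hΦ : ∀ z a b, Φ z (finProdFinEquiv (a, b)) = z a b := by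
        intro z a b
        simp [Φ, Equiv.arrowCongr]
      rw [← Φ.sum_comp]
      simp only [hw, hΦ, ← Finset.prod_mul_distrib]
      have := Finset.prod_univ_sum (fun _ : Fin q => (Finset.univ : Finset (Fin M → Bool)))
        (fun _ z => (∏ b, W (z b)) * (1 - Z z))
      rw [Fintype.piFinset_univ] at this
      rw [← this]
      simp [hblock]
    have htw : ∑ x : Fin (q * M) → Bool, weight p x = 1 := htot _
    have hle : 1 - (1 - p ^ M) ^ q ≤ queryProb (K m) (fun h => ed h.length) (q * M) p := by
      have h1' : 1 - (1 - p ^ M) ^ q = ∑ x : Fin (q * M) → Bool, weight p x -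
          ∑ x : Fin (q * M) → Bool, weight p x *
            ∏ a : Fin q, (1 - Z (fun b => x (finProdFinEquiv (a, b)))) := by rw [hfail, htw]
      rw [h1', ← Finset.sum_sub_distrib]
      unfold queryProb
      apply Finset.sum_le_sum
      intro x _
      rw [← mul_one_sub]
      apply mul_le_mul_of_nonneg_left _ (weight_nonneg h0.le h1.le x)
      have hnn : (0 : ℝ) ≤ ∏ a : Fin q, (1 - Z (fun b => x (finProdFinEquiv (a, b)))) := by
        apply Finset.prod_nonneg
        intro a _
        simp only [Z]
        split_ifs <;> norm_num
      by_cases hx : ∃ a : Fin q, ∀ b : Fin M, x (finProdFinEquiv (a, b)) = true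
      · rw [if_pos (hsucc x hx)]
        linarith
      · have : ∏ a : Fin q, (1 - Z (fun b => x (finProdFinEquiv (a, b)))) = 1 := by
          apply Finset.prod_eq_one
          intro a _
          have : ¬ ∀ b : Fin M, x (finProdFinEquiv (a, b)) = true := fun h => hx ⟨a, h⟩
          simp only [Z, if_neg this, sub_zero]
        rw [this, sub_self]
        split_ifs <;> norm_num
    linarith

theorem stmt17 (m : ℕ) (hm : 3 ≤ m) (c : ℕ) (hc : (c : ℝ) ≤ (m : ℝ) / 2)
    (p : ℝ) (hp : p ∈ Set.Ioo (0 : ℝ) 1) :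
    (1 / 4 : ℝ) * p ^ (-(((m.choose 2 : ℝ) - (c : ℝ) * ((c : ℝ) - 1)) / ((m : ℝ) - (c : ℝ)))) ≤
      (fQuery (K m) p : ℝ) := by
  obtain ⟨h0, h1⟩ := hp
  have hc' : 2 * c ≤ m := by
    have : (2 * c : ℝ) ≤ m := by linarith
    exact_mod_cast this
  have hmem : fQuery (K m) p ∈ {N | ∃ Q : List Bool → Sym2 ℕ, ValidBuilder Q ∧
      (1 : ℝ) / 2 ≤ queryProb (K m) Q N p} := Nat.sInf_mem (exists_strategy m hm h0 h1)
  generalize fQuery (K m) p = N at hmem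
  obtain ⟨Q, hQ, hhalf⟩ := hmem
  have hle := hhalf.trans (queryProb_le m c hm hc' Q hQ N h0.le h1.le)
  have hcc : c * (c - 1) ≤ m.choose 2 := by
    rw [Nat.choose_two_right, Nat.le_div_iff_mul_le (by norm_num)]
    calc c * (c - 1) * 2 = (2 * c) * (c - 1) := by ring
      _ ≤ m * (m - 1) := Nat.mul_le_mul hc' (by omega)
  set E := m.choose 2 - c * (c - 1) with hE
  set k := m - c with hk
  have hk0 : 1 ≤ k := by omega
  have hkR : ((m : ℝ) - c) = (k : ℝ) := by
    rw [hk, Nat.cast_sub (by omega)]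
  have hER : ((m.choose 2 : ℝ) - (c : ℝ) * ((c : ℝ) - 1)) = (E : ℝ) := by
    rw [hE, Nat.cast_sub hcc, Nat.cast_mul]
    rcases Nat.eq_zero_or_pos c with rfl | h
    · simp
    · rw [Nat.cast_sub h, Nat.cast_one]
  rw [hkR, hER]
  by_contra hlt
  push Not at hlt
  have hpow : (N : ℝ) ^ k < ((1 / 4 : ℝ) * p ^ (-((E : ℝ) / k))) ^ k :=
    pow_lt_pow_left₀ hlt (by positivity) (by omega)
  have hk1 : (k : ℝ) ≠ 0 := by positivity
  have hpE : (p ^ (-((E : ℝ) / k))) ^ k = (p ^ E)⁻¹ := by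
    rw [← Real.rpow_natCast, ← Real.rpow_mul h0.le, neg_mul, div_mul_cancel₀ _ hk1,
      Real.rpow_neg h0.le, Real.rpow_natCast]
  rw [mul_pow, hpE] at hpow
  have hpp : 0 < p ^ E := by positivity
  have h2 : (N : ℝ) ^ k * p ^ E < (1 / 4 : ℝ) ^ k := by
    calc (N : ℝ) ^ k * p ^ E < (1 / 4 : ℝ) ^ k * (p ^ E)⁻¹ * p ^ E :=
          mul_lt_mul_of_pos_right hpow hpp
      _ = (1 / 4 : ℝ) ^ k := by field_simp
  have h3 : (1 / 4 : ℝ) ^ k ≤ (1 / 4 : ℝ) ^ 1 :=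
    pow_le_pow_of_le_one (by norm_num) (by norm_num) hk0
  norm_num at h3 hle
  linarith

end OnlineRamseyGame
end
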